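/- Let λ > 0 be a positive real number. Then there exist constants C, c > 0, a potential V : ℝ² → ℂ, and a nonzero twice continuously differentiable function u : ℝ² → ℂ such that Δu + λu = V·u on ℝ², |V(x)| ≤ C·⟨x⟩^{-1/2} for all x ∈ ℝ², and |u(x)| ≤ C·exp(−c|x|) for all x ∈ ℝ². -/

import Mathlib

noncomputable section

/-- Partial derivative of `u` in the `i`-th coordinate direction. -/
def pd (u : EuclideanSpace ℝ (Fin 2) → ℂ) (i : Fin 2) (x : EuclideanSpace ℝ (Fin 2)) : ℂ :=
  fderiv ℝ u x (EuclideanSpace.single i 1)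

/-- Laplacian on ℝ²: sum of second partial derivatives. -/
def lap (u : EuclideanSpace ℝ (Fin 2) → ℂ) (x : EuclideanSpace ℝ (Fin 2)) : ℂ :=
  ∑ i, pd (fun y => pd u i y) i x

/-!
Following Meshkov, work in logarithmic coordinates `ζ = s + iθ`, where `Δv + 3/4 v = 0` becomes
`ΔG + 3/4 e^{2s} G = 0`. On the annulus `m ≤ e^{s/2} ≤ m + 1` a wave of angular frequency about
`m²` and modulus decaying with logarithmic slope about `m² / 2` solves this up to a relative error
`O(m³)`, because `(m² / 2)² - m⁴ + 3/4 m⁴ = 0`. Such a wave is exchanged in every annulus for one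
of the next frequency `±m(m + 1)`, of opposite sign. Where the two waves have equal modulus their
sum has zeros; there the phase of the new wave is modulated by `2/m sin g`, `g` being the phase
difference, so that the error beyond a common factor vanishes together with the sum. An error of
order `m³ ≈ |z|^{3/2}` in logarithmic coordinates is one of order `|z|^{-1/2}` in the plane, and
integrating the slope `m² / 2 ≈ |z| / 2` gives exponential decay. Near the origin the solution is a
monomial, and a dilation provides all positive eigenvalues.
-/

open Set Filter Topology InnerProductSpace Laplacian
open Real (smoothTransition)
open Complex (I)

theorem deriv_eq_zero_of_eqOn_const {f : ℝ → ℝ} {s : Set ℝ} {c x : ℝ} (hf : DifferentiableAt ℝ f x)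
    (hs : UniqueDiffOn ℝ s) (hfs : EqOn f (fun _ ↦ c) s) (hx : x ∈ s) : deriv f x = 0 := by
  rw [← hf.derivWithin (hs x hx), derivWithin_congr hfs (hfs hx), derivWithin_fun_const]
  rfl

theorem deriv_smoothTransition_eq_zero {x : ℝ} (hx : x ≤ 0 ∨ 1 ≤ x) :
    deriv smoothTransition x = 0 := by
  have hd : DifferentiableAt ℝ smoothTransition x :=
    (Real.smoothTransition.contDiff (n := 1)).differentiable (by simp) x
  rcases hx with hx | hx
  · exact deriv_eq_zero_of_eqOn_const hd (uniqueDiffOn_Iic 0)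
      (fun _ ↦ Real.smoothTransition.zero_of_nonpos) hx
  · exact deriv_eq_zero_of_eqOn_const hd (uniqueDiffOn_Ici 1)
      (fun _ ↦ Real.smoothTransition.one_of_one_le) hx

theorem contDiff_deriv_smoothTransition {n : ℕ} : ContDiff ℝ n (deriv smoothTransition) :=
  (Real.smoothTransition.contDiff (n := (n + 1 : ℕ))).deriv'

theorem deriv_deriv_smoothTransition_eq_zero {x : ℝ} (hx : x ≤ 0 ∨ 1 ≤ x) :
    deriv (deriv smoothTransition) x = 0 := by
  have hd : DifferentiableAt ℝ (deriv smoothTransition) x :=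
    (contDiff_deriv_smoothTransition (n := 1)).differentiable (by simp) x
  rcases hx with hx | hx
  · exact deriv_eq_zero_of_eqOn_const hd (uniqueDiffOn_Iic 0)
      (fun _ hy ↦ deriv_smoothTransition_eq_zero (.inl hy)) hx
  · exact deriv_eq_zero_of_eqOn_const hd (uniqueDiffOn_Ici 1)
      (fun _ hy ↦ deriv_smoothTransition_eq_zero (.inr hy)) hx

theorem exists_abs_deriv_smoothTransition_le :
    ∃ K, 1 ≤ K ∧ ∀ x, |deriv smoothTransition x| ≤ K ∧ |deriv (deriv smoothTransition) x| ≤ K := by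
  obtain ⟨K₁, hK₁⟩ := isCompact_Icc.exists_bound_of_continuousOn (s := Icc (0 : ℝ) 1)
    (contDiff_deriv_smoothTransition (n := 0)).continuous.continuousOn
  obtain ⟨K₂, hK₂⟩ := isCompact_Icc.exists_bound_of_continuousOn (s := Icc (0 : ℝ) 1)
    ((contDiff_deriv_smoothTransition (n := 1)).continuous_deriv (by simp)).continuousOn
  refine ⟨max 1 (max K₁ K₂), le_max_left _ _, fun x ↦ ?_⟩
  by_cases hx : x ∈ Icc (0 : ℝ) 1
  · exact ⟨(hK₁ x hx).trans (by simp), (hK₂ x hx).trans (by simp)⟩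
  · have hx' : x ≤ 0 ∨ 1 ≤ x := by
      rw [mem_Icc, not_and_or, not_le, not_le] at hx
      exact hx.imp le_of_lt le_of_lt
    simp [deriv_smoothTransition_eq_zero hx', deriv_deriv_smoothTransition_eq_zero hx']

variable {F : Type*} [NormedAddCommGroup F] [NormedSpace ℝ F]

theorem iteratedFDeriv_two_eq_deriv_deriv {E : Type*} [NormedAddCommGroup E] [NormedSpace ℝ E]
    {f : E → F} {γ : ℝ → E} {e : E} (hf : ContDiff ℝ 2 f) (hγ : ∀ x, HasDerivAt γ e x) (x : ℝ) :
    iteratedFDeriv ℝ 2 f (γ x) ![e, e] = deriv (deriv (f ∘ γ)) x := by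
  have hf' : Differentiable ℝ (fderiv ℝ f) :=
    (hf.fderiv_right (m := 1) (by norm_num)).differentiable (by simp)
  have h₁ : deriv (f ∘ γ) = fun y ↦ fderiv ℝ f (γ y) e := funext fun y ↦
    ((hf.differentiable (by simp) _).hasFDerivAt.comp_hasDerivAt y (hγ y)).deriv
  have h₂ : HasDerivAt (fun y ↦ fderiv ℝ f (γ y) e) (fderiv ℝ (fderiv ℝ f) (γ x) e e) x := by
    simpa using ((hf' (γ x)).hasFDerivAt.comp_hasDerivAt x (hγ x)).clm_apply (hasDerivAt_const x e)
  rw [h₁, h₂.deriv, iteratedFDeriv_two_apply]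
  rfl

theorem laplacian_eq_deriv_deriv {f : ℂ → F} (hf : ContDiff ℝ 2 f) (z : ℂ) :
    Δ f z = deriv (deriv fun x : ℝ ↦ f ⟨x, z.im⟩) z.re +
      deriv (deriv fun y : ℝ ↦ f ⟨z.re, y⟩) z.im := by
  have hre (x : ℝ) : HasDerivAt (fun x : ℝ ↦ (⟨x, z.im⟩ : ℂ)) 1 x := by
    simpa [Complex.mk_eq_add_mul_I] using
      (Complex.ofRealCLM.hasDerivAt (x := x)).add_const (z.im * I)
  have him (y : ℝ) : HasDerivAt (fun y : ℝ ↦ (⟨z.re, y⟩ : ℂ)) I y := by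
    simpa [Complex.mk_eq_add_mul_I] using
      ((Complex.ofRealCLM.hasDerivAt (x := y)).mul_const I).const_add (z.re : ℂ)
  rw [laplacian_eq_iteratedFDeriv_complexPlane]
  exact congrArg₂ (· + ·) (iteratedFDeriv_two_eq_deriv_deriv hf hre z.re)
    (iteratedFDeriv_two_eq_deriv_deriv hf him z.im)

theorem deriv_deriv_mul_cexp {X X' φ φ' : ℝ → ℂ} {X'' φ'' : ℂ} {x : ℝ}
    (hX : ∀ y, HasDerivAt X (X' y) y) (hX' : HasDerivAt X' X'' x)
    (hφ : ∀ y, HasDerivAt φ (φ' y) y) (hφ' : HasDerivAt φ' φ'' x) :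
    deriv (deriv fun y ↦ X y * Complex.exp (φ y)) x =
      (X'' + 2 * X' x * φ' x + X x * (φ'' + φ' x ^ 2)) * Complex.exp (φ x) := by
  have h₁ : deriv (fun y ↦ X y * Complex.exp (φ y)) =
      fun y ↦ (X' y + X y * φ' y) * Complex.exp (φ y) := funext fun y ↦ by
    rw [((hX y).fun_mul (hφ y).cexp).deriv]; ring
  rw [h₁, ((hX'.fun_add ((hX x).fun_mul hφ')).fun_mul (hφ x).cexp).deriv]
  ring

theorem fderiv_fderiv_comp_of_analyticAt {f : ℂ → ℂ} {g : ℂ → F} {z : ℂ} (hf : AnalyticAt ℂ f z)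
    (hg : ContDiffAt ℝ 2 g (f z)) (e : ℂ) :
    fderiv ℝ (fderiv ℝ (g ∘ f)) z e e =
      fderiv ℝ (fderiv ℝ g) (f z) (deriv f z * e) (deriv f z * e) +
        fderiv ℝ g (f z) (deriv (deriv f) z * e ^ 2) := by
  have hasFDerivAt_real {h : ℂ → ℂ} {y : ℂ} (hh : AnalyticAt ℂ h y) :
      HasFDerivAt h (deriv h y • (1 : ℂ →L[ℝ] ℂ)) y :=
    hh.differentiableAt.hasDerivAt.complexToReal_fderiv
  have hgf : ContDiffAt ℝ 2 (g ∘ f) z := hg.comp z (hf.contDiffAt.restrict_scalars ℝ)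
  have hfirst : (fun y ↦ fderiv ℝ (g ∘ f) y e) =ᶠ[𝓝 z]
      fun y ↦ fderiv ℝ g (f y) (deriv f y * e) := by
    filter_upwards [hf.eventually_analyticAt,
      hf.continuousAt.eventually (hg.eventually (by simp))] with y hfy hgy
    rw [((hgy.differentiableAt (by simp)).hasFDerivAt.comp y (hasFDerivAt_real hfy)).fderiv]
    simp
  have hdg : DifferentiableAt ℝ (fderiv ℝ g) (f z) :=
    (hg.fderiv_right (m := 1) (by norm_num)).differentiableAt (by simp)
  have hdgf : DifferentiableAt ℝ (fderiv ℝ (g ∘ f)) z :=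
    (hgf.fderiv_right (m := 1) (by norm_num)).differentiableAt (by simp)
  have hleft : fderiv ℝ (fun y ↦ fderiv ℝ (g ∘ f) y e) z e = fderiv ℝ (fderiv ℝ (g ∘ f)) z e e := by
    rw [fderiv_clm_apply hdgf (differentiableAt_const e)]
    simp
  have hright : HasFDerivAt (fun y ↦ fderiv ℝ g (f y) (deriv f y * e)) _ z :=
    (hdg.hasFDerivAt.comp z (hasFDerivAt_real hf)).clm_apply
      ((hasFDerivAt_real hf.deriv).mul_const e)
  rw [← hleft, hfirst.fderiv_eq, hright.fderiv]
  simp [sq, mul_comm, mul_left_comm, add_comm]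

theorem apply_self_add_apply_I_mul (B : ℂ →L[ℝ] ℂ →L[ℝ] F) (a : ℂ) :
    B a a + B (a * I) (a * I) = ‖a‖ ^ 2 • (B 1 1 + B I I) := by
  obtain ⟨x, y⟩ := a
  have h : (⟨x, y⟩ : ℂ) = x • 1 + y • I := by simp [Complex.mk_eq_add_mul_I]
  have h' : (⟨x, y⟩ : ℂ) * I = (-y) • 1 + x • I := by
    simp [Complex.mk_eq_add_mul_I, add_mul, mul_assoc, add_comm]
  rw [h', Complex.sq_norm, Complex.normSq_mk, h]
  simp only [map_add, map_smul, add_apply, smul_apply]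
  module

theorem laplacian_comp_of_analyticAt {f : ℂ → ℂ} {g : ℂ → F} {z : ℂ} (hf : AnalyticAt ℂ f z)
    (hg : ContDiffAt ℝ 2 g (f z)) : Δ (g ∘ f) z = ‖deriv f z‖ ^ 2 • Δ g (f z) := by
  simp only [laplacian_eq_iteratedFDeriv_complexPlane, iteratedFDeriv_two_apply]
  have h1 := fderiv_fderiv_comp_of_analyticAt hf hg 1
  have hI := fderiv_fderiv_comp_of_analyticAt hf hg I
  simp only [Matrix.cons_val_zero, Matrix.cons_val_one, Matrix.cons_val_fin_one, h1, hI,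
    ← apply_self_add_apply_I_mul, Complex.I_sq, mul_one, one_pow, mul_neg, map_neg]
  abel

theorem lap_eq_laplacian {u : EuclideanSpace ℝ (Fin 2) → ℂ} (hu : ContDiff ℝ 2 u)
    (x : EuclideanSpace ℝ (Fin 2)) : lap u x = Δ u x := by
  have hu' : Differentiable ℝ (fderiv ℝ u) :=
    (hu.fderiv_right (m := 1) (by norm_num)).differentiable (by simp)
  rw [laplacian_eq_iteratedFDeriv_orthonormalBasis u (EuclideanSpace.basisFun (Fin 2) ℝ)]
  refine Finset.sum_congr rfl fun i _ ↦ ?_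
  rw [iteratedFDeriv_two_apply, EuclideanSpace.basisFun_apply]
  simp only [pd, fderiv_clm_apply (hu' x) (differentiableAt_const _)]
  simp

theorem laplacian_comp_smul_linearIsometryEquiv {E E' : Type*} [NormedAddCommGroup E]
    [InnerProductSpace ℝ E] [FiniteDimensional ℝ E] [NormedAddCommGroup E'] [InnerProductSpace ℝ E']
    [FiniteDimensional ℝ E'] (A : E ≃ₗᵢ[ℝ] E') (μ : ℝ) {v : E' → F} (hv : ContDiff ℝ 2 v) (x : E) :
    Δ (fun y ↦ v (μ • A y)) x = μ ^ 2 • Δ v (μ • A x) := by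
  let L : E →L[ℝ] E' := μ • (A.toContinuousLinearEquiv : E →L[ℝ] E')
  rw [laplacian_eq_iteratedFDeriv_orthonormalBasis _ (stdOrthonormalBasis ℝ E),
    laplacian_eq_iteratedFDeriv_orthonormalBasis v ((stdOrthonormalBasis ℝ E).map A),
    Finset.smul_sum]
  refine Finset.sum_congr rfl fun i _ ↦ ?_
  change iteratedFDeriv ℝ 2 (v ∘ L) x _ = _
  rw [L.iteratedFDeriv_comp_right hv x le_rfl, iteratedFDeriv_two_apply]
  simp [L, iteratedFDeriv_two_apply, smul_smul, sq]

theorem floor_glue_eventuallyEq {X Y : Type*} [TopologicalSpace X] {t : X → ℝ} {P : ℕ → X → Y}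
    {δ : ℝ} (ht : Continuous t) (ht₀ : ∀ x, 0 ≤ t x) (hδ : 0 < δ)
    (hP : ∀ (m : ℕ) x, m + 1 - δ ≤ t x → t x ≤ m + 1 → P m x = P (m + 1) x) (x : X) :
    (fun y ↦ P ⌊t y⌋₊ y) =ᶠ[𝓝 x] P ⌊t x⌋₊ := by
  have hlow : max (⌊t x⌋₊ - δ) (⌊t x⌋₊ - 1) < t x :=
    (max_lt (by linarith) (by linarith)).trans_le (Nat.floor_le (ht₀ x))
  filter_upwards [ht.continuousAt.eventually (lt_mem_nhds hlow),
    ht.continuousAt.eventually (gt_mem_nhds (Nat.lt_floor_add_one (t x)))] with y hy hy'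
  obtain ⟨hyδ, hy1⟩ := max_lt_iff.1 hy
  generalize ⌊t x⌋₊ = n at *
  rcases le_or_gt (n : ℝ) (t y) with h | h
  · rw [(Nat.floor_eq_iff (ht₀ y)).2 ⟨h, hy'⟩]
  · obtain ⟨m, rfl⟩ : ∃ m, n = m + 1 :=
      Nat.exists_eq_succ_of_ne_zero (by rintro rfl; simpa using (ht₀ y).trans_lt h)
    push_cast at *
    rw [(Nat.floor_eq_iff (ht₀ y)).2 ⟨by linarith, h⟩, hP m y (by linarith) h.le]

theorem exists_eq_mul_of_norm_le {X : Type*} {f u : X → ℂ} {B : X → ℝ} (hB : ∀ x, 0 ≤ B x)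
    (h : ∀ x, ‖f x‖ ≤ B x * ‖u x‖) : ∃ V : X → ℂ, (∀ x, f x = V x * u x) ∧ ∀ x, ‖V x‖ ≤ B x := by
  refine ⟨fun x ↦ f x / u x, fun x ↦ ?_, fun x ↦ ?_⟩
  · refine (div_mul_cancel_of_imp fun hu ↦ ?_).symm
    simpa [hu] using h x
  · rw [norm_div]
    exact div_le_of_le_mul₀ (norm_nonneg _) (hB x) (h x)

/-- A wave in log-polar coordinates `ζ = s + iθ`. In the rescaled radial variable
`T = scale * (s - center)` its value is `amp T * exp (logMod T + iφ)`, with a phase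
`φ = freq * θ + mod T * sin (modFreq * θ)` that may wobble periodically in the angle. -/
structure Wave where
  scale : ℝ
  center : ℝ
  freq : ℤ
  modFreq : ℤ
  amp : ℝ → ℝ
  logMod : ℝ → ℝ
  mod : ℝ → ℝ
  contDiff_amp : ContDiff ℝ 2 amp
  contDiff_logMod : ContDiff ℝ 2 logMod
  contDiff_mod : ContDiff ℝ 2 mod

/-- The defect of a function in the Helmholtz equation `Δv + 3/4 v = 0`, transported to log-polar
coordinates `ζ = s + iθ`, where it reads `ΔG + 3/4 e^{2s} G = 0`. -/
def helmholtzDefect (G : ℂ → ℂ) (ζ : ℂ) : ℂ := Δ G ζ + 3 / 4 * Real.exp (2 * ζ.re) * G ζ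

namespace Wave

variable (w : Wave) (ζ : ℂ)

/-- The rescaled radial variable of a wave. -/
def radial : ℝ := w.scale * (ζ.re - w.center)

/-- The angular phase of a wave, without the radial amplitude. -/
def phase : ℝ := w.freq * ζ.im + w.mod (w.radial ζ) * Real.sin (w.modFreq * ζ.im)

/-- The exponential factor of a wave. -/
def carrier : ℂ := Complex.exp (w.logMod (w.radial ζ) + I * w.phase ζ)

/-- The function a wave describes. -/
def eval : ℂ := w.amp (w.radial ζ) * w.carrier ζ

/-- The radial derivative of the complex logarithm of the carrier. -/
def radialLogDeriv : ℂ :=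
  w.scale * (deriv w.logMod (w.radial ζ) +
    I * (deriv w.mod (w.radial ζ) * Real.sin (w.modFreq * ζ.im)))

/-- The angular derivative of the phase. -/
def localFreq : ℝ := w.freq + w.mod (w.radial ζ) * (w.modFreq * Real.cos (w.modFreq * ζ.im))

/-- The Laplacian of the complex logarithm of the carrier. -/
def laplacianLog : ℂ :=
  w.scale ^ 2 * (deriv (deriv w.logMod) (w.radial ζ) +
      I * (deriv (deriv w.mod) (w.radial ζ) * Real.sin (w.modFreq * ζ.im))) -
    I * (w.mod (w.radial ζ) * (w.modFreq ^ 2 * Real.sin (w.modFreq * ζ.im)))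

/-- The factor by which the Laplacian of a wave differs from its carrier. -/
def symbol : ℂ :=
  w.scale ^ 2 * deriv (deriv w.amp) (w.radial ζ) +
    2 * (w.scale * deriv w.amp (w.radial ζ)) * w.radialLogDeriv ζ +
    w.amp (w.radial ζ) * (w.laplacianLog ζ + w.radialLogDeriv ζ ^ 2 - w.localFreq ζ ^ 2)

theorem norm_carrier : ‖w.carrier ζ‖ = Real.exp (w.logMod (w.radial ζ)) := by
  simp [carrier, Complex.norm_exp]

theorem carrier_eq_norm_smul : w.carrier ζ = ‖w.carrier ζ‖ • Complex.exp (I * w.phase ζ) := by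
  rw [norm_carrier, carrier, Complex.exp_add, Complex.real_smul, Complex.ofReal_exp]

theorem contDiff_eval : ContDiff ℝ 2 w.eval := by
  have hre : ContDiff ℝ 2 fun ζ : ℂ ↦ ζ.re := Complex.reCLM.contDiff
  have him : ContDiff ℝ 2 fun ζ : ℂ ↦ ζ.im := Complex.imCLM.contDiff
  have hradial : ContDiff ℝ 2 w.radial := contDiff_const.mul (hre.sub contDiff_const)
  have ofReal {f : ℂ → ℝ} (hf : ContDiff ℝ 2 f) : ContDiff ℝ 2 fun ζ ↦ (f ζ : ℂ) :=
    Complex.ofRealCLM.contDiff.comp hf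
  have hphase : ContDiff ℝ 2 w.phase :=
    (contDiff_const.mul him).add ((w.contDiff_mod.comp hradial).mul
      (contDiff_const.mul him).sin)
  exact (ofReal (w.contDiff_amp.comp hradial)).mul
    ((ofReal (w.contDiff_logMod.comp hradial)).add (contDiff_const.mul (ofReal hphase))).cexp

theorem hasDerivAt_ofReal_comp_radial {f : ℝ → ℝ} (hf : Differentiable ℝ f) (y x : ℝ) :
    HasDerivAt (fun x : ℝ ↦ (f (w.radial ⟨x, y⟩) : ℂ)) (w.scale * deriv f (w.radial ⟨x, y⟩)) x := by
  have h : HasDerivAt (fun x : ℝ ↦ w.radial ⟨x, y⟩) w.scale x := by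
    simpa [radial] using ((hasDerivAt_id x).sub_const w.center).const_mul w.scale
  simpa [mul_comm] using ((hf _).hasDerivAt.comp x h).ofReal_comp

theorem deriv_deriv_eval_radial (x y : ℝ) :
    deriv (deriv fun x : ℝ ↦ w.eval ⟨x, y⟩) x =
      (w.scale ^ 2 * deriv (deriv w.amp) (w.radial ⟨x, y⟩) +
        2 * (w.scale * deriv w.amp (w.radial ⟨x, y⟩)) * w.radialLogDeriv ⟨x, y⟩ +
        w.amp (w.radial ⟨x, y⟩) *
          (w.scale ^ 2 * (deriv (deriv w.logMod) (w.radial ⟨x, y⟩) +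
            I * (deriv (deriv w.mod) (w.radial ⟨x, y⟩) * Real.sin (w.modFreq * y))) +
          w.radialLogDeriv ⟨x, y⟩ ^ 2)) * w.carrier ⟨x, y⟩ := by
  have hd {f : ℝ → ℝ} (hf : ContDiff ℝ 2 f) (x : ℝ) :=
    w.hasDerivAt_ofReal_comp_radial (hf.differentiable (by simp)) y x
  have hd' {f : ℝ → ℝ} (hf : ContDiff ℝ 2 f) (x : ℝ) :=
    (w.hasDerivAt_ofReal_comp_radial hf.differentiable_deriv_two y x).const_mul (w.scale : ℂ)
  have hphase (x : ℝ) :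
      HasDerivAt (fun x : ℝ ↦ (w.logMod (w.radial ⟨x, y⟩) + I * w.phase ⟨x, y⟩ : ℂ))
        (w.radialLogDeriv ⟨x, y⟩) x := by
    convert! (hd w.contDiff_logMod x).fun_add ((((hd w.contDiff_mod x).mul_const
      (Real.sin (w.modFreq * y) : ℂ)).const_add ((w.freq * y : ℝ) : ℂ)).const_mul I) using 1
    · simp [phase]
    · simp only [radialLogDeriv]; ring
  have hlogDeriv : HasDerivAt (fun x : ℝ ↦ w.radialLogDeriv ⟨x, y⟩)
      (w.scale ^ 2 * (deriv (deriv w.logMod) (w.radial ⟨x, y⟩) +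
        I * (deriv (deriv w.mod) (w.radial ⟨x, y⟩) * Real.sin (w.modFreq * y)))) x := by
    convert! (hd' w.contDiff_logMod x).fun_add
      (((hd' w.contDiff_mod x).mul_const (Real.sin (w.modFreq * y) : ℂ)).const_mul I) using 1
    · simp only [radialLogDeriv]; ext; ring
    · ring
  refine (deriv_deriv_mul_cexp (hd w.contDiff_amp) (hd' w.contDiff_amp x) hphase hlogDeriv).trans ?_
  rw [carrier]
  ring

theorem deriv_deriv_eval_angular (x y : ℝ) :
    deriv (deriv fun y : ℝ ↦ w.eval ⟨x, y⟩) y =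
      w.amp (w.radial ⟨x, y⟩) * (-(I * (w.mod (w.radial ⟨x, y⟩) *
        (w.modFreq ^ 2 * Real.sin (w.modFreq * y)))) - w.localFreq ⟨x, y⟩ ^ 2) *
        w.carrier ⟨x, y⟩ := by
  have hmul (y : ℝ) : HasDerivAt (fun y : ℝ ↦ w.modFreq * y) w.modFreq y := by
    simpa using (hasDerivAt_id y).const_mul (w.modFreq : ℝ)
  have hphase (y : ℝ) : HasDerivAt (fun y : ℝ ↦ w.phase ⟨x, y⟩) (w.localFreq ⟨x, y⟩) y := by
    convert! ((hasDerivAt_id y).const_mul (w.freq : ℝ)).fun_add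
      ((hmul y).sin.const_mul (w.mod (w.radial ⟨x, 0⟩))) using 1
    simp only [localFreq, radial]; ring
  have hfreq : HasDerivAt (fun y : ℝ ↦ I * (w.localFreq ⟨x, y⟩ : ℂ))
      (-(I * (w.mod (w.radial ⟨x, y⟩) * (w.modFreq ^ 2 * Real.sin (w.modFreq * y))))) y := by
    convert! (((((hmul y).cos.const_mul (w.modFreq : ℝ)).const_mul
      (w.mod (w.radial ⟨x, 0⟩))).const_add (w.freq : ℝ)).ofReal_comp).const_mul I using 1
    simp only [radial]; push_cast; ring
  refine (deriv_deriv_mul_cexp (fun y ↦ hasDerivAt_const y (w.amp (w.radial ⟨x, 0⟩) : ℂ))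
    (hasDerivAt_const y 0) (fun y ↦ (((hphase y).ofReal_comp.const_mul I).const_add
      (w.logMod (w.radial ⟨x, 0⟩) : ℂ))) hfreq).trans ?_
  rw [mul_pow, Complex.I_sq, carrier]
  simp only [radial]
  ring

theorem radial_add_two_pi_I : w.radial (ζ + 2 * Real.pi * I) = w.radial ζ := by
  simp [radial]

theorem phase_add_two_pi_I :
    w.phase (ζ + 2 * Real.pi * I) = w.phase ζ + w.freq * (2 * Real.pi) := by
  have him : (ζ + 2 * Real.pi * I).im = ζ.im + 2 * Real.pi := by simp
  rw [phase, phase, radial_add_two_pi_I, him, mul_add, mul_add, Real.sin_add_int_mul_two_pi]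
  ring

theorem eval_add_two_pi_I : w.eval (ζ + 2 * Real.pi * I) = w.eval ζ := by
  have hturn : (I * (w.phase ζ + w.freq * (2 * Real.pi) : ℝ) : ℂ) =
      I * w.phase ζ + w.freq * (2 * Real.pi * I) := by
    push_cast; ring
  rw [eval, carrier, radial_add_two_pi_I, phase_add_two_pi_I, hturn, ← add_assoc,
    Complex.exp_periodic.int_mul]
  rfl

theorem laplacian_eval : Δ w.eval ζ = w.symbol ζ * w.carrier ζ := by
  rw [laplacian_eq_deriv_deriv w.contDiff_eval, w.deriv_deriv_eval_radial,
    w.deriv_deriv_eval_angular, symbol, laplacianLog]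
  ring

/-- The factor by which the Helmholtz operator `Δ + 3/4 e^{2s}` turns the carrier of a wave into
the defect of the wave. -/
def helmholtzSymbol : ℂ :=
  w.symbol ζ + 3 / 4 * Real.exp (2 * ζ.re) * w.amp (w.radial ζ)

theorem helmholtzSymbol_of_amp_eq_one (h₀ : w.amp (w.radial ζ) = 1)
    (h₁ : deriv w.amp (w.radial ζ) = 0) (h₂ : deriv (deriv w.amp) (w.radial ζ) = 0) :
    w.helmholtzSymbol ζ = w.laplacianLog ζ + w.radialLogDeriv ζ ^ 2 - w.localFreq ζ ^ 2 +
      3 / 4 * Real.exp (2 * ζ.re) := by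
  simp [helmholtzSymbol, symbol, h₀, h₁, h₂]

theorem norm_sq_sub_sq_le {z : ℂ} {r δ : ℝ} (hr : 0 ≤ r) (h : ‖z + r‖ ≤ δ) :
    ‖z ^ 2 - r ^ 2‖ ≤ δ * (δ + 2 * r) := by
  have hsub : ‖z - r‖ ≤ δ + 2 * r := by
    have hz : z - r = z + r - ((2 * r : ℝ) : ℂ) := by push_cast; ring
    rw [hz]
    refine (norm_sub_le _ _).trans ?_
    rw [Complex.norm_of_nonneg (by positivity)]
    gcongr
  rw [sq_sub_sq, norm_mul]
  exact mul_le_mul h hsub (norm_nonneg _) ((norm_nonneg _).trans h)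

theorem norm_helmholtzSymbol_le {w : Wave} {ζ : ℂ} {j K : ℝ} (hj : 1 ≤ j) (hK : 1 ≤ K)
    (hamp : |w.amp (w.radial ζ)| ≤ 1)
    (hamp' : |w.scale * deriv w.amp (w.radial ζ)| ≤ K * j)
    (hamp'' : |w.scale ^ 2 * deriv (deriv w.amp) (w.radial ζ)| ≤ K * j ^ 3)
    (hlogDeriv : ‖w.radialLogDeriv ζ + (j ^ 2 / 2 : ℝ)‖ ≤ K * j)
    (hlog : ‖w.laplacianLog ζ‖ ≤ K * j ^ 3)
    (hfreq : |w.localFreq ζ ^ 2 - j ^ 4| ≤ K * j ^ 3)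
    (hexp : |Real.exp (2 * ζ.re) - j ^ 4| ≤ K * j ^ 3) :
    ‖w.helmholtzSymbol ζ‖ ≤ 9 * K ^ 2 * j ^ 3 := by
  set Q := w.radialLogDeriv ζ
  set E := Real.exp (2 * ζ.re)
  set ω := w.localFreq ζ
  set a := w.amp (w.radial ζ)
  have hQ : ‖Q‖ ≤ K * j + j ^ 2 / 2 := by
    refine (norm_le_add_norm_add Q ((j ^ 2 / 2 : ℝ) : ℂ)).trans ?_
    rw [Complex.norm_of_nonneg (by positivity)]
    gcongr
  have hQ_sq : ‖Q ^ 2 - ((j ^ 2 / 2 : ℝ) : ℂ) ^ 2‖ ≤ K * j * (K * j + 2 * (j ^ 2 / 2)) :=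
    norm_sq_sub_sq_le (by positivity) hlogDeriv
  have hcross := mul_le_mul hamp' hQ (norm_nonneg _) (by positivity)
  have hbracket : ‖(a : ℂ) * (w.laplacianLog ζ + (Q ^ 2 - ((j ^ 2 / 2 : ℝ) : ℂ) ^ 2) -
        ((ω ^ 2 - j ^ 4 : ℝ) : ℂ) + ((3 / 4 * (E - j ^ 4) : ℝ) : ℂ))‖ ≤
      K * j ^ 3 + K * j * (K * j + 2 * (j ^ 2 / 2)) + K * j ^ 3 + K * j ^ 3 := by
    rw [norm_mul, Complex.norm_real]
    refine (mul_le_of_le_one_left (norm_nonneg _) hamp).trans ((norm_add_le _ _).trans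
      (add_le_add ((norm_sub_le _ _).trans (add_le_add ((norm_add_le _ _).trans
        (add_le_add hlog hQ_sq)) ?_)) ?_))
    · rwa [Complex.norm_real]
    · rw [Complex.norm_real, Real.norm_eq_abs, abs_mul, abs_of_pos (by norm_num : (0 : ℝ) < 3 / 4)]
      linarith [abs_nonneg (E - j ^ 4)]
  -- The leading terms cancel: `(j² / 2)² - j⁴ + 3 / 4 * j⁴ = 0`.
  have hsplit : w.helmholtzSymbol ζ =
      ((w.scale ^ 2 * deriv (deriv w.amp) (w.radial ζ) : ℝ) : ℂ) +
      2 * ((w.scale * deriv w.amp (w.radial ζ) : ℝ) : ℂ) * Q +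
      (a : ℂ) * (w.laplacianLog ζ + (Q ^ 2 - ((j ^ 2 / 2 : ℝ) : ℂ) ^ 2) -
        ((ω ^ 2 - j ^ 4 : ℝ) : ℂ) + ((3 / 4 * (E - j ^ 4) : ℝ) : ℂ)) := by
    simp only [helmholtzSymbol, symbol, Q, E, ω, a]
    push_cast
    ring
  rw [hsplit]
  refine norm_add₃_le.trans ((add_le_add_right hbracket _).trans ?_)
  rw [norm_mul, norm_mul, Complex.norm_real, Complex.norm_real, Complex.norm_ofNat,
    Real.norm_eq_abs, Real.norm_eq_abs]
  have hpow : j ^ 2 ≤ j ^ 3 := pow_le_pow_right₀ hj (by norm_num)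
  have hK2 : K * j ^ 3 ≤ K ^ 2 * j ^ 3 := by gcongr; nlinarith
  have hKj : K ^ 2 * j ^ 2 ≤ K ^ 2 * j ^ 3 := by gcongr
  linarith

theorem helmholtzDefect_eval : helmholtzDefect w.eval ζ = w.helmholtzSymbol ζ * w.carrier ζ := by
  rw [helmholtzDefect, laplacian_eval, helmholtzSymbol, eval]
  ring

end Wave

/-- The line `T ↦ a + α T`, smoothly bent into the line `T ↦ a + (α + β) T` across
`b ≤ T ≤ b + 1`. -/
def bentLine (a α β b T : ℝ) : ℝ := a + α * T + β * (smoothTransition (T - b) * T)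

section bentLine

variable {a α β b : ℝ}

theorem contDiff_smoothTransition_sub : ContDiff ℝ 2 fun T ↦ smoothTransition (T - b) :=
  Real.smoothTransition.contDiff.comp (contDiff_id.sub contDiff_const)

theorem contDiff_bentLine : ContDiff ℝ 2 (bentLine a α β b) :=
  (contDiff_const.add (contDiff_const.mul contDiff_id)).add
    (contDiff_const.mul (contDiff_smoothTransition_sub.mul contDiff_id))

theorem hasDerivAt_smoothTransition_sub (b T : ℝ) :
    HasDerivAt (fun T ↦ smoothTransition (T - b)) (deriv smoothTransition (T - b)) T :=
  ((Real.smoothTransition.contDiff (n := 1)).differentiable (by simp) _).hasDerivAt.comp_sub_const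
    T b

theorem hasDerivAt_deriv_smoothTransition_sub (b T : ℝ) :
    HasDerivAt (fun T ↦ deriv smoothTransition (T - b))
      (deriv (deriv smoothTransition) (T - b)) T :=
  ((contDiff_deriv_smoothTransition (n := 1)).differentiable (by simp) _).hasDerivAt.comp_sub_const
    T b

theorem deriv_bentLine : deriv (bentLine a α β b) = fun T ↦
    α + β * (deriv smoothTransition (T - b) * T + smoothTransition (T - b)) := by
  ext T
  have h := (((hasDerivAt_id T).const_mul α).const_add a).fun_add
    (((hasDerivAt_smoothTransition_sub b T).fun_mul (hasDerivAt_id T)).const_mul β)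
  exact h.deriv.trans (by simp)

theorem deriv_deriv_bentLine (T : ℝ) : deriv (deriv (bentLine a α β b)) T =
    β * (deriv (deriv smoothTransition) (T - b) * T + 2 * deriv smoothTransition (T - b)) := by
  have h := ((((hasDerivAt_deriv_smoothTransition_sub b T).fun_mul
    (hasDerivAt_id T)).fun_add (hasDerivAt_smoothTransition_sub b T)).const_mul β).const_add α
  rw [deriv_bentLine]
  refine h.deriv.trans ?_
  simp only [id_eq]
  ring

theorem bentLine_of_le {T : ℝ} (hT : T ≤ b) : bentLine a α β b T = a + α * T := by
  simp [bentLine, Real.smoothTransition.zero_of_nonpos (sub_nonpos.2 hT)]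

theorem bentLine_of_ge {T : ℝ} (hT : b + 1 ≤ T) : bentLine a α β b T = a + (α + β) * T := by
  rw [bentLine, Real.smoothTransition.one_of_one_le (by linarith)]
  ring

end bentLine

/-- The logarithmic radius at the middle of the `m`-th zone `m ≤ e^{s/2} ≤ m + 1`. -/
def zoneCenter (m : ℕ) : ℝ := 2 * Real.log (m + 1 / 2)

/-- The logarithm of the size of the solution at `zoneCenter m`. Between consecutive centers it
drops with slope `(m + 1) * (m + 3) / 2`, the common slope of the waves glued there. -/
def zoneLevel : ℕ → ℝ
  | 0 => 0
  | m + 1 => zoneLevel m - (m + 1) * (m + 3) / 2 * (zoneCenter (m + 1) - zoneCenter m)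

/-- The angular frequency that the solution has on entering the `m`-th zone. The signs alternate, as
in Meshkov's construction, so that the two frequencies present in a zone nearly have equal modulus
but interfere quickly. -/
def zoneFreq (m : ℕ) : ℤ := (-1) ^ m * (m * (m - 1))

/-- The radial variable of the `m`-th zone, which ranges over `[-4, 4]` there. -/
def zoneCoord (m : ℕ) (ζ : ℂ) : ℝ := 4 * m * (ζ.re - zoneCenter m)

/-- The wave that the solution sheds in the `m`-th zone. -/
def fadingWave (m : ℕ) : Wave where
  scale := 4 * m
  center := zoneCenter m
  freq := zoneFreq m
  modFreq := 0
  amp T := 1 - smoothTransition (T - 1)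
  logMod := bentLine (zoneLevel m) (-((m + 2) / 8)) 0 0
  mod _ := 0
  contDiff_amp := contDiff_const.sub contDiff_smoothTransition_sub
  contDiff_logMod := contDiff_bentLine
  contDiff_mod := contDiff_const

/-- The wave that replaces the fading wave in the `m`-th zone. While both are present, its phase is
modulated by `2 / m * sin (ν θ)`, where `ν` is the difference of the two frequencies. The two moduli
agree at `T = 0`; beyond `T = 2` the slope is bent to that of the fading wave of the next zone,
which is `-((m + 1) * (m + 3) / (8 * m))` in terms of `T`. -/
def risingWave (m : ℕ) : Wave where
  scale := 4 * m
  center := zoneCenter m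
  freq := zoneFreq (m + 1)
  modFreq := zoneFreq (m + 1) - zoneFreq m
  amp T := smoothTransition (T + 3)
  logMod := bentLine (zoneLevel m) (1 - (m + 2) / 8) (-(5 / 4 + 3 / (8 * m))) 2
  mod T := 2 / m * (1 - smoothTransition (T - 2))
  contDiff_amp := Real.smoothTransition.contDiff.comp (contDiff_id.add contDiff_const)
  contDiff_logMod := contDiff_bentLine
  contDiff_mod := contDiff_const.mul (contDiff_const.sub contDiff_smoothTransition_sub)

theorem radial_fadingWave (m : ℕ) (ζ : ℂ) : (fadingWave m).radial ζ = zoneCoord m ζ := rfl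

theorem radial_risingWave (m : ℕ) (ζ : ℂ) : (risingWave m).radial ζ = zoneCoord m ζ := rfl

/-- The approximate solution in the `m`-th zone. -/
def zone (m : ℕ) (ζ : ℂ) : ℂ := (fadingWave m).eval ζ + (risingWave m).eval ζ

section symbol

variable {m : ℕ} {ζ : ℂ} {K : ℝ}

theorem amp_fadingWave (T : ℝ) : (fadingWave m).amp T = 1 - smoothTransition (T - 1) := rfl

theorem amp_risingWave (T : ℝ) : (risingWave m).amp T = smoothTransition (T + 3) := rfl

theorem deriv_amp_fadingWave (T : ℝ) :
    deriv (fadingWave m).amp T = -deriv smoothTransition (T - 1) := by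
  simp [fadingWave, deriv_comp_sub_const]

theorem deriv_deriv_amp_fadingWave (T : ℝ) :
    deriv (deriv (fadingWave m).amp) T = -deriv (deriv smoothTransition) (T - 1) := by
  simp [funext deriv_amp_fadingWave, deriv_comp_sub_const]

theorem deriv_amp_risingWave (T : ℝ) :
    deriv (risingWave m).amp T = deriv smoothTransition (T + 3) := by
  simp [risingWave, deriv_comp_add_const]

theorem deriv_deriv_amp_risingWave (T : ℝ) :
    deriv (deriv (risingWave m).amp) T = deriv (deriv smoothTransition) (T + 3) := by
  simp [funext deriv_amp_risingWave, deriv_comp_add_const]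

theorem deriv_mod_risingWave (T : ℝ) :
    deriv (risingWave m).mod T = -(2 / m * deriv smoothTransition (T - 2)) := by
  simp [risingWave, deriv_comp_sub_const]

theorem deriv_deriv_mod_risingWave (T : ℝ) :
    deriv (deriv (risingWave m).mod) T = -(2 / m * deriv (deriv smoothTransition) (T - 2)) := by
  simp [funext deriv_mod_risingWave, deriv_comp_sub_const]

theorem radialLogDeriv_fadingWave :
    (fadingWave m).radialLogDeriv ζ = ((-(m * (m + 2) / 2) : ℝ) : ℂ) := by
  simp [Wave.radialLogDeriv, fadingWave, deriv_bentLine]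
  ring

theorem laplacianLog_fadingWave : (fadingWave m).laplacianLog ζ = 0 := by
  simp [Wave.laplacianLog, fadingWave, deriv_deriv_bentLine]

theorem localFreq_fadingWave : (fadingWave m).localFreq ζ = zoneFreq m := by
  simp [Wave.localFreq, fadingWave]

theorem modFreq_risingWave : ((risingWave m).modFreq : ℝ) = -((-1) ^ m * (2 * m ^ 2)) := by
  simp only [risingWave, zoneFreq]
  push_cast
  ring

theorem localFreq_risingWave : (risingWave m).localFreq ζ =
    -((-1) ^ m * (m ^ 2 + m + 4 * m * (1 - smoothTransition (zoneCoord m ζ - 2)) *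
      Real.cos ((risingWave m).modFreq * ζ.im))) := by
  rw [Wave.localFreq, radial_risingWave]
  generalize Real.cos _ = x
  rw [modFreq_risingWave]
  simp only [risingWave, zoneFreq]
  push_cast
  field_simp
  ring

theorem neg_one_pow_mul_sq (x : ℝ) : ((-1) ^ m * x) ^ 2 = x ^ 2 := by
  rw [mul_pow, ← pow_mul, pow_mul', neg_one_sq, one_pow, one_mul]

theorem localFreq_fadingWave_sq : (fadingWave m).localFreq ζ ^ 2 = (m ^ 2 - m) ^ 2 := by
  rw [localFreq_fadingWave, zoneFreq]
  push_cast
  rw [neg_one_pow_mul_sq]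
  ring

theorem localFreq_risingWave_sq : (risingWave m).localFreq ζ ^ 2 =
    (m ^ 2 + m + 4 * m * (1 - smoothTransition (zoneCoord m ζ - 2)) *
      Real.cos ((risingWave m).modFreq * ζ.im)) ^ 2 := by
  rw [localFreq_risingWave, neg_sq, neg_one_pow_mul_sq]

theorem abs_one_sub_smoothTransition_le (x : ℝ) : |1 - smoothTransition x| ≤ 1 :=
  abs_le.2 ⟨by linarith [Real.smoothTransition.le_one x], by
    linarith [Real.smoothTransition.nonneg x]⟩

theorem abs_mul_le_of_abs_le {a b A B : ℝ} (ha : |a| ≤ A) (hb : |b| ≤ B) : |a * b| ≤ A * B := by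
  rw [abs_mul]
  exact mul_le_mul ha hb (abs_nonneg b) ((abs_nonneg a).trans ha)

theorem abs_mul_le_of_nonneg {c b B : ℝ} (hc : 0 ≤ c) (hb : |b| ≤ B) : |c * b| ≤ c * B :=
  abs_mul_le_of_abs_le (abs_of_nonneg hc).le hb

theorem norm_helmholtzSymbol_fadingWave_le (hK : 1 ≤ K)
    (hst : ∀ x, |deriv smoothTransition x| ≤ K ∧ |deriv (deriv smoothTransition) x| ≤ K)
    (hm : m ≠ 0) (hexp : |Real.exp (2 * ζ.re) - m ^ 4| ≤ 15 * m ^ 3) :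
    ‖(fadingWave m).helmholtzSymbol ζ‖ ≤ 9 * (300 * K) ^ 2 * m ^ 3 := by
  have hm1 : (1 : ℝ) ≤ m := Nat.one_le_cast.2 (Nat.one_le_iff_ne_zero.2 hm)
  have hpow : (m : ℝ) ^ 2 ≤ m ^ 3 := pow_le_pow_right₀ hm1 (by norm_num)
  have hmK : (m : ℝ) ≤ K * m := le_mul_of_one_le_left (by positivity) hK
  have hmK3 : (m : ℝ) ^ 3 ≤ K * m ^ 3 := le_mul_of_one_le_left (by positivity) hK
  have hKpow : K * (m : ℝ) ^ 2 ≤ K * m ^ 3 := by gcongr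
  have hm3 : 0 ≤ (m : ℝ) ^ 3 := by positivity
  refine Wave.norm_helmholtzSymbol_le hm1 (by linarith) (abs_one_sub_smoothTransition_le _)
    ?_ ?_ ?_ ?_ ?_ ?_
  · rw [deriv_amp_fadingWave, mul_neg, abs_neg]
    exact (abs_mul_le_of_nonneg (c := 4 * m) (by positivity) (hst _).1).trans (by linarith)
  · rw [deriv_deriv_amp_fadingWave, mul_neg, abs_neg]
    exact (abs_mul_le_of_nonneg (c := (4 * m) ^ 2) (by positivity) (hst _).2).trans (by linarith)
  · rw [radialLogDeriv_fadingWave, ← Complex.ofReal_add, Complex.norm_real, Real.norm_eq_abs,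
      show -(m * (m + 2) / 2) + (m : ℝ) ^ 2 / 2 = -m by ring, abs_neg, Nat.abs_cast]
    linarith
  · rw [laplacianLog_fadingWave, norm_zero]
    positivity
  · rw [localFreq_fadingWave_sq, abs_le]
    constructor <;> nlinarith
  · linarith

theorem abs_deriv_bentLine_le {a α β b T τ : ℝ}
    (hst : ∀ x, |deriv smoothTransition x| ≤ K ∧ |deriv (deriv smoothTransition) x| ≤ K)
    (hT : |T| ≤ τ) : |deriv (bentLine a α β b) T - α| ≤ |β| * (K * τ + 1) := by
  rw [deriv_bentLine, add_sub_cancel_left, abs_mul]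
  gcongr
  refine (abs_add_le _ _).trans (add_le_add (abs_mul_le_of_abs_le (hst _).1 hT) ?_)
  rw [abs_of_nonneg (Real.smoothTransition.nonneg _)]
  exact Real.smoothTransition.le_one _

theorem abs_deriv_deriv_bentLine_le {a α β b T τ : ℝ}
    (hst : ∀ x, |deriv smoothTransition x| ≤ K ∧ |deriv (deriv smoothTransition) x| ≤ K)
    (hT : |T| ≤ τ) : |deriv (deriv (bentLine a α β b)) T| ≤ |β| * (K * τ + 2 * K) := by
  rw [deriv_deriv_bentLine, abs_mul]
  gcongr
  exact (abs_add_le _ _).trans (add_le_add (abs_mul_le_of_abs_le (hst _).2 hT)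
    (abs_mul_le_of_abs_le (by norm_num) (hst _).1))

theorem abs_bend_le (hm : m ≠ 0) : |-(5 / 4 + 3 / (8 * (m : ℝ)))| ≤ 2 := by
  have hm1 : (1 : ℝ) ≤ m := Nat.one_le_cast.2 (Nat.one_le_iff_ne_zero.2 hm)
  have h : 3 / (8 * (m : ℝ)) ≤ 3 / 8 := by gcongr; linarith
  rw [abs_neg, abs_of_nonneg (by positivity)]
  linarith

theorem norm_radialLogDeriv_risingWave_add_le (hK : 1 ≤ K)
    (hst : ∀ x, |deriv smoothTransition x| ≤ K ∧ |deriv (deriv smoothTransition) x| ≤ K)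
    (hm : m ≠ 0) (hT : |zoneCoord m ζ| ≤ 4) :
    ‖(risingWave m).radialLogDeriv ζ + (m ^ 2 / 2 : ℝ)‖ ≤ 51 * K * m := by
  have hm1 : (1 : ℝ) ≤ m := Nat.one_le_cast.2 (Nat.one_le_iff_ne_zero.2 hm)
  have hbend := abs_deriv_bentLine_le (a := zoneLevel m) (α := 1 - (m + 2) / 8)
    (β := -(5 / 4 + 3 / (8 * m))) (b := 2) hst hT
  set q := deriv (bentLine (zoneLevel m) (1 - (m + 2) / 8) (-(5 / 4 + 3 / (8 * m))) 2)
    (zoneCoord m ζ)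
  set η' := deriv smoothTransition (zoneCoord m ζ - 2)
  set x := Real.sin ((risingWave m).modFreq * ζ.im)
  have hsplit : (risingWave m).radialLogDeriv ζ + (m ^ 2 / 2 : ℝ) =
      ((4 * m * (q - (1 - (m + 2) / 8)) + 3 * m : ℝ) : ℂ) + ((-(8 * (η' * x)) : ℝ) : ℂ) * I := by
    simp only [Wave.radialLogDeriv, radial_risingWave, deriv_mod_risingWave]
    simp only [risingWave, x, q, η']
    push_cast
    field_simp
    ring
  have hq : |q - (1 - (m + 2) / 8)| ≤ 2 * (K * 4 + 1) :=
    hbend.trans (by gcongr; exact abs_bend_le hm)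
  have hη : |η' * x| ≤ K * 1 := abs_mul_le_of_abs_le (hst _).1 (Real.abs_sin_le_one _)
  rw [hsplit]
  refine (norm_add_le _ _).trans ?_
  rw [norm_mul, Complex.norm_I, mul_one, Complex.norm_real, Complex.norm_real, Real.norm_eq_abs,
    Real.norm_eq_abs, abs_neg, abs_mul 8, abs_of_pos (by norm_num : (0 : ℝ) < 8)]
  refine (add_le_add_left (abs_add_le _ _) _).trans ?_
  rw [abs_mul (4 * (m : ℝ)), abs_of_pos (by positivity : 0 < 4 * (m : ℝ)),
    abs_of_pos (by positivity : 0 < 3 * (m : ℝ))]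
  nlinarith [mul_nonneg (sub_nonneg.2 hK) (sub_nonneg.2 hm1)]

theorem laplacianLog_risingWave (hm : m ≠ 0) : (risingWave m).laplacianLog ζ =
    ((16 * m ^ 2 * deriv (deriv (risingWave m).logMod) (zoneCoord m ζ) : ℝ) : ℂ) -
      ((32 * m * deriv (deriv smoothTransition) (zoneCoord m ζ - 2) +
        8 * m ^ 3 * (1 - smoothTransition (zoneCoord m ζ - 2)) : ℝ) : ℂ) *
      (Real.sin ((risingWave m).modFreq * ζ.im) * I) := by
  have hν : ((risingWave m).modFreq : ℂ) ^ 2 = (2 * m ^ 2) ^ 2 := by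
    have h : ((risingWave m).modFreq : ℝ) ^ 2 = (2 * m ^ 2) ^ 2 := by
      rw [modFreq_risingWave, neg_sq, neg_one_pow_mul_sq]
    exact_mod_cast h
  rw [Wave.laplacianLog, radial_risingWave, deriv_deriv_mod_risingWave, hν]
  simp only [risingWave]
  push_cast
  field_simp
  ring

theorem norm_laplacianLog_risingWave_le (hK : 1 ≤ K)
    (hst : ∀ x, |deriv smoothTransition x| ≤ K ∧ |deriv (deriv smoothTransition) x| ≤ K)
    (hm : m ≠ 0) (hT : |zoneCoord m ζ| ≤ 4) :
    ‖(risingWave m).laplacianLog ζ‖ ≤ 232 * K * m ^ 3 := by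
  have hm1 : (1 : ℝ) ≤ m := Nat.one_le_cast.2 (Nat.one_le_iff_ne_zero.2 hm)
  have hpow₁ : K * (m : ℝ) ≤ K * m ^ 3 := by gcongr; exact le_self_pow₀ hm1 (by norm_num)
  have hpow₂ : K * (m : ℝ) ^ 2 ≤ K * m ^ 3 := by gcongr; norm_num
  have hpow₃ : (m : ℝ) ^ 3 ≤ K * m ^ 3 := le_mul_of_one_le_left (by positivity) hK
  have hbend : |deriv (deriv (risingWave m).logMod) (zoneCoord m ζ)| ≤
      2 * (K * 4 + 2 * K) :=
    (abs_deriv_deriv_bentLine_le hst hT).trans (by gcongr; exact abs_bend_le hm)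
  have hη := (hst (zoneCoord m ζ - 2)).2
  have hη₀ := abs_one_sub_smoothTransition_le (zoneCoord m ζ - 2)
  rw [laplacianLog_risingWave hm]
  refine (norm_sub_le _ _).trans ?_
  rw [Complex.norm_real, Real.norm_eq_abs, norm_mul, norm_mul, Complex.norm_I, mul_one,
    Complex.norm_real, Complex.norm_real]
  refine (add_le_add (abs_mul_le_of_nonneg (by positivity) hbend)
    (mul_le_mul ((abs_add_le _ _).trans (add_le_add
      (abs_mul_le_of_nonneg (by positivity) hη) (abs_mul_le_of_nonneg (by positivity) hη₀)))
      (Real.abs_sin_le_one _) (abs_nonneg _) (by positivity))).trans ?_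
  linarith

theorem abs_localFreq_risingWave_sq_sub_le (hm : m ≠ 0) :
    |(risingWave m).localFreq ζ ^ 2 - m ^ 4| ≤ 35 * m ^ 3 := by
  have hm1 : (1 : ℝ) ≤ m := Nat.one_le_cast.2 (Nat.one_le_iff_ne_zero.2 hm)
  have hx := abs_mul_le_of_abs_le
    (abs_one_sub_smoothTransition_le (zoneCoord m ζ - 2))
    (Real.abs_cos_le_one ((risingWave m).modFreq * ζ.im))
  rw [localFreq_risingWave_sq, mul_assoc (4 * (m : ℝ))]
  generalize (1 - smoothTransition _) * Real.cos _ = x at hx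
  obtain ⟨hx₁, hx₂⟩ := abs_le.1 hx
  have hr : |m + 4 * m * x| ≤ 5 * (m : ℝ) := abs_le.2 ⟨by nlinarith, by nlinarith⟩
  have hsplit : ((m : ℝ) ^ 2 + m + 4 * m * x) ^ 2 - m ^ 4 =
      2 * m ^ 2 * (m + 4 * m * x) + (m + 4 * m * x) * (m + 4 * m * x) := by ring
  have hpow : (m : ℝ) ^ 2 ≤ m ^ 3 := pow_le_pow_right₀ hm1 (by norm_num)
  rw [hsplit]
  refine (abs_add_le _ _).trans ((add_le_add
    (abs_mul_le_of_nonneg (by positivity) hr)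
    (abs_mul_le_of_abs_le hr hr)).trans ?_)
  linarith

theorem norm_helmholtzSymbol_risingWave_le (hK : 1 ≤ K)
    (hst : ∀ x, |deriv smoothTransition x| ≤ K ∧ |deriv (deriv smoothTransition) x| ≤ K)
    (hm : m ≠ 0) (hexp : |Real.exp (2 * ζ.re) - m ^ 4| ≤ 15 * m ^ 3)
    (hT : |zoneCoord m ζ| ≤ 4) :
    ‖(risingWave m).helmholtzSymbol ζ‖ ≤ 9 * (300 * K) ^ 2 * m ^ 3 := by
  have hm1 : (1 : ℝ) ≤ m := Nat.one_le_cast.2 (Nat.one_le_iff_ne_zero.2 hm)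
  have hKm : 0 ≤ K * m := by positivity
  have hKm3 : 0 ≤ K * (m : ℝ) ^ 3 := by positivity
  have hKpow : K * (m : ℝ) ^ 2 ≤ K * m ^ 3 := by gcongr; norm_num
  have hmK3 : (m : ℝ) ^ 3 ≤ K * m ^ 3 := le_mul_of_one_le_left (by positivity) hK
  refine Wave.norm_helmholtzSymbol_le hm1 (by linarith) ?_ ?_ ?_
    ((norm_radialLogDeriv_risingWave_add_le hK hst hm hT).trans (by linarith))
    ((norm_laplacianLog_risingWave_le hK hst hm hT).trans (by linarith))
    ((abs_localFreq_risingWave_sq_sub_le hm).trans (by linarith)) (by linarith)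
  · exact (abs_of_nonneg (Real.smoothTransition.nonneg _)).trans_le (Real.smoothTransition.le_one _)
  · rw [deriv_amp_risingWave]
    exact (abs_mul_le_of_nonneg (c := 4 * m) (by positivity) (hst _).1).trans (by linarith)
  · rw [deriv_deriv_amp_risingWave]
    exact (abs_mul_le_of_nonneg (c := (4 * m) ^ 2) (by positivity) (hst _).2).trans (by linarith)

end symbol

section interference

theorem norm_mul_add_mul_le_of_dominated {S S' x y : ℂ} {b D : ℝ} (hS : ‖S‖ ≤ D) (hS' : ‖S'‖ ≤ D)
    (hb : |b| ≤ 1) (hyx : ‖y‖ ≤ ‖x‖ / 2) : ‖S * x + S' * y‖ ≤ 3 * D * ‖x + b * y‖ := by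
  have hD : 0 ≤ D := (norm_nonneg S).trans hS
  have hby : ‖(b : ℂ) * y‖ ≤ ‖x‖ / 2 := by
    rw [norm_mul, Complex.norm_real]
    exact (mul_le_of_le_one_left (norm_nonneg y) hb).trans hyx
  have hlow : ‖x‖ / 2 ≤ ‖x + b * y‖ := by linarith [norm_sub_le_norm_add x (b * y)]
  calc ‖S * x + S' * y‖ ≤ ‖S‖ * ‖x‖ + ‖S'‖ * ‖y‖ := by
        rw [← norm_mul, ← norm_mul]; exact norm_add_le _ _
    _ ≤ D * ‖x‖ + D * (‖x‖ / 2) := by gcongr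
    _ = 3 * D * (‖x‖ / 2) := by ring
    _ ≤ 3 * D * ‖x + b * y‖ := by gcongr

theorem mul_norm_add_le_two_mul_norm_smul_add_smul {E : Type*} [NormedAddCommGroup E]
    [NormedSpace ℝ E] {x y : E} {r ρ : ℝ} (hx : ‖x‖ = 1) (hy : ‖y‖ = 1) (hr : 0 ≤ r) (hρ : 0 ≤ ρ) :
    ρ * ‖x + y‖ ≤ 2 * ‖r • x + ρ • y‖ := by
  have hrρ : |ρ - r| ≤ ‖r • x + ρ • y‖ := by
    have h := abs_norm_sub_norm_le (ρ • y) (-(r • x))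
    rwa [norm_neg, norm_smul, norm_smul, hx, hy, mul_one, mul_one, Real.norm_of_nonneg hr,
      Real.norm_of_nonneg hρ, sub_neg_eq_add, add_comm (ρ • y)] at h
  have hsplit : ρ • (x + y) = r • x + ρ • y + (ρ - r) • x := by module
  calc ρ * ‖x + y‖ = ‖ρ • (x + y)‖ := by rw [norm_smul, Real.norm_of_nonneg hρ]
    _ ≤ ‖r • x + ρ • y‖ + |ρ - r| := by
        rw [hsplit]
        refine (norm_add_le _ _).trans_eq ?_
        rw [norm_smul, hx, mul_one, Real.norm_eq_abs]
    _ ≤ 2 * ‖r • x + ρ • y‖ := by linarith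

theorem abs_one_add_cos_le_norm (g : ℝ) : |1 + Real.cos g| ≤ ‖1 + Complex.exp (I * g)‖ := by
  refine le_trans (le_of_eq ?_) (Complex.abs_re_le_norm _)
  simp [mul_comm I, Complex.exp_ofReal_mul_I_re]

theorem abs_sin_le_norm_one_add_exp (g : ℝ) : |Real.sin g| ≤ ‖1 + Complex.exp (I * g)‖ := by
  refine le_trans (le_of_eq ?_) (Complex.abs_im_le_norm _)
  simp [mul_comm I, Complex.exp_ofReal_mul_I_im]

-- The modulation `κ * sin g` vanishes, together with `1 + exp (i g)`, where the waves cancel.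
theorem norm_one_add_exp_le_two_mul {g κ : ℝ} (hκ : |κ| ≤ 1 / 2) :
    ‖1 + Complex.exp (I * g)‖ ≤ 2 * ‖1 + Complex.exp (I * (g + κ * Real.sin g : ℝ))‖ := by
  have hexp : Complex.exp (I * (g + κ * Real.sin g : ℝ)) - Complex.exp (I * g) =
      Complex.exp (I * g) * (Complex.exp (I * (κ * Real.sin g : ℝ)) - 1) := by
    rw [mul_sub, ← Complex.exp_add]
    push_cast
    ring_nf
  have hdiff : ‖Complex.exp (I * (g + κ * Real.sin g : ℝ)) - Complex.exp (I * g)‖ ≤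
      1 / 2 * ‖1 + Complex.exp (I * g)‖ := by
    rw [hexp, norm_mul, mul_comm I (g : ℂ), Complex.norm_exp_ofReal_mul_I, one_mul]
    refine Real.norm_exp_I_mul_ofReal_sub_one_le.trans ?_
    rw [norm_mul, mul_comm (g : ℂ)]
    exact mul_le_mul hκ (abs_sin_le_norm_one_add_exp g) (norm_nonneg _) (by norm_num)
  have hsplit : (1 : ℂ) + Complex.exp (I * g) = 1 + Complex.exp (I * (g + κ * Real.sin g : ℝ)) -
      (Complex.exp (I * (g + κ * Real.sin g : ℝ)) - Complex.exp (I * g)) := by ring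
  have h := norm_sub_le (1 + Complex.exp (I * (g + κ * Real.sin g : ℝ)))
    (Complex.exp (I * (g + κ * Real.sin g : ℝ)) - Complex.exp (I * g))
  rw [← hsplit] at h
  linarith

end interference

theorem helmholtzDefect_add {G H : ℂ → ℂ} {ζ : ℂ} (hG : ContDiff ℝ 2 G) (hH : ContDiff ℝ 2 H) :
    helmholtzDefect (fun ζ ↦ G ζ + H ζ) ζ = helmholtzDefect G ζ + helmholtzDefect H ζ := by
  have h : Δ (fun ζ ↦ G ζ + H ζ) ζ = Δ G ζ + Δ H ζ :=
    hG.contDiffAt.laplacian_add hH.contDiffAt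
  rw [helmholtzDefect, helmholtzDefect, helmholtzDefect, h]
  ring

section zone

variable {m : ℕ} {ζ : ℂ}

theorem helmholtzDefect_zone : helmholtzDefect (zone m) ζ =
    (fadingWave m).helmholtzSymbol ζ * (fadingWave m).carrier ζ +
      (risingWave m).helmholtzSymbol ζ * (risingWave m).carrier ζ := by
  rw [← Wave.helmholtzDefect_eval, ← Wave.helmholtzDefect_eval]
  exact helmholtzDefect_add (Wave.contDiff_eval _) (Wave.contDiff_eval _)

theorem norm_carrier_fadingWave : ‖(fadingWave m).carrier ζ‖ =
    Real.exp (zoneLevel m - (m + 2) / 8 * zoneCoord m ζ) := by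
  rw [Wave.norm_carrier, radial_fadingWave]
  simp [fadingWave, bentLine, sub_eq_add_neg]

theorem norm_carrier_risingWave (hT : zoneCoord m ζ ≤ 2) : ‖(risingWave m).carrier ζ‖ =
    Real.exp (zoneLevel m + (1 - (m + 2) / 8) * zoneCoord m ζ) := by
  rw [Wave.norm_carrier, radial_risingWave]
  exact congrArg Real.exp (bentLine_of_le hT)

theorem exp_le_half_exp {x y : ℝ} (h : x ≤ y - 1) : Real.exp x ≤ Real.exp y / 2 := by
  have h₁ := Real.exp_le_exp.2 (le_sub_iff_add_le.1 h)
  rw [Real.exp_add] at h₁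
  nlinarith [Real.add_one_le_exp 1, Real.exp_pos x]

theorem helmholtzSymbol_fadingWave_of_le_one (hT : zoneCoord m ζ ≤ 1) :
    (fadingWave m).helmholtzSymbol ζ =
      (((m * (m + 2) / 2) ^ 2 - (m ^ 2 - m) ^ 2 + 3 / 4 * Real.exp (2 * ζ.re) : ℝ) : ℂ) := by
  have hT' : zoneCoord m ζ - 1 ≤ 0 := by linarith
  rw [Wave.helmholtzSymbol_of_amp_eq_one, laplacianLog_fadingWave, radialLogDeriv_fadingWave,
    ← Complex.ofReal_pow (Wave.localFreq _ _), localFreq_fadingWave_sq]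
  · push_cast; ring
  · rw [radial_fadingWave, amp_fadingWave, Real.smoothTransition.zero_of_nonpos hT', sub_zero]
  · rw [radial_fadingWave, deriv_amp_fadingWave, deriv_smoothTransition_eq_zero (.inl hT'),
      neg_zero]
  · rw [radial_fadingWave, deriv_deriv_amp_fadingWave,
      deriv_deriv_smoothTransition_eq_zero (.inl hT'), neg_zero]

theorem radialLogDeriv_risingWave_of_le_two (hT : zoneCoord m ζ ≤ 2) :
    (risingWave m).radialLogDeriv ζ = ((4 * m - m * (m + 2) / 2 : ℝ) : ℂ) := by
  have hT' : zoneCoord m ζ - 2 ≤ 0 := by linarith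
  rw [Wave.radialLogDeriv, radial_risingWave, deriv_mod_risingWave,
    deriv_smoothTransition_eq_zero (.inl hT')]
  simp only [risingWave, deriv_bentLine, deriv_smoothTransition_eq_zero (.inl hT'),
    Real.smoothTransition.zero_of_nonpos hT']
  push_cast
  ring

theorem laplacianLog_risingWave_of_le_two (hm : m ≠ 0) (hT : zoneCoord m ζ ≤ 2) :
    (risingWave m).laplacianLog ζ =
      -((8 * m ^ 3 * Real.sin ((risingWave m).modFreq * ζ.im) : ℝ) : ℂ) * I := by
  have hT' : zoneCoord m ζ - 2 ≤ 0 := by linarith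
  rw [laplacianLog_risingWave hm, deriv_deriv_smoothTransition_eq_zero (.inl hT'),
    Real.smoothTransition.zero_of_nonpos hT']
  simp only [risingWave, deriv_deriv_bentLine, deriv_smoothTransition_eq_zero (.inl hT'),
    deriv_deriv_smoothTransition_eq_zero (.inl hT')]
  push_cast
  ring

theorem helmholtzSymbol_risingWave_of_mem_Icc (hm : m ≠ 0) (hT : zoneCoord m ζ ∈ Icc (-2) 2) :
    (risingWave m).helmholtzSymbol ζ = (((4 * m - m * (m + 2) / 2) ^ 2 -
        (m ^ 2 + m + 4 * m * Real.cos ((risingWave m).modFreq * ζ.im)) ^ 2 +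
        3 / 4 * Real.exp (2 * ζ.re) : ℝ) : ℂ) -
      ((8 * m ^ 3 * Real.sin ((risingWave m).modFreq * ζ.im) : ℝ) : ℂ) * I := by
  have hT₁ : 1 ≤ zoneCoord m ζ + 3 := by linarith [hT.1]
  have hT₂ : zoneCoord m ζ - 2 ≤ 0 := by linarith [hT.2]
  rw [Wave.helmholtzSymbol_of_amp_eq_one, laplacianLog_risingWave_of_le_two hm hT.2,
    radialLogDeriv_risingWave_of_le_two hT.2, ← Complex.ofReal_pow (Wave.localFreq _ _),
    localFreq_risingWave_sq, Real.smoothTransition.zero_of_nonpos hT₂]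
  · push_cast; ring
  · rw [radial_risingWave, amp_risingWave, Real.smoothTransition.one_of_one_le hT₁]
  · rw [radial_risingWave, deriv_amp_risingWave, deriv_smoothTransition_eq_zero (.inr hT₁)]
  · rw [radial_risingWave, deriv_deriv_amp_risingWave,
      deriv_deriv_smoothTransition_eq_zero (.inr hT₁)]

theorem norm_helmholtzSymbol_risingWave_sub_fadingWave_le (hm : 3 ≤ m)
    (hT : zoneCoord m ζ ∈ Icc (-1) 1) :
    ‖(risingWave m).helmholtzSymbol ζ - (fadingWave m).helmholtzSymbol ζ‖ ≤
      24 * m ^ 3 * ‖1 + Complex.exp (I * ((risingWave m).modFreq * ζ.im : ℝ))‖ := by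
  have hm3 : (3 : ℝ) ≤ m := by exact_mod_cast hm
  rw [helmholtzSymbol_fadingWave_of_le_one hT.2, helmholtzSymbol_risingWave_of_mem_Icc (by lia)
    ⟨by linarith [hT.1], by linarith [hT.2]⟩]
  generalize (risingWave m).modFreq * ζ.im = g
  have hc := Real.abs_cos_le_one g
  have hfactor : |4 * m * (2 * m ^ 2 - 6 * m + 4 * m * (1 + Real.cos g))| ≤ 16 * (m : ℝ) ^ 3 := by
    obtain ⟨hc₁, hc₂⟩ := abs_le.1 hc
    have hnonneg : 0 ≤ 2 * (m : ℝ) ^ 2 - 6 * m + 4 * m * (1 + Real.cos g) := by nlinarith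
    rw [abs_of_nonneg (by positivity)]
    nlinarith [mul_nonneg (sq_nonneg (m : ℝ)) (sub_nonneg.2 hc₂)]
  have hre := mul_le_mul hfactor (abs_one_add_cos_le_norm g) (abs_nonneg _) (by positivity)
  have him := abs_mul_le_of_nonneg (c := 8 * (m : ℝ) ^ 3) (by positivity)
    (abs_sin_le_norm_one_add_exp g)
  rw [← abs_mul] at hre
  have hsplit (E : ℝ) : (((4 * m - m * (m + 2) / 2) ^ 2 - (m ^ 2 + m + 4 * m * Real.cos g) ^ 2 +
        E : ℝ) : ℂ) - ((8 * m ^ 3 * Real.sin g : ℝ) : ℂ) * I -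
        (((m * (m + 2) / 2) ^ 2 - (m ^ 2 - m) ^ 2 + E : ℝ) : ℂ) =
      -((4 * m * (2 * m ^ 2 - 6 * m + 4 * m * (1 + Real.cos g)) * (1 + Real.cos g) : ℝ) : ℂ) -
        ((8 * m ^ 3 * Real.sin g : ℝ) : ℂ) * I := by
    push_cast
    ring
  rw [hsplit]
  refine (norm_sub_le _ _).trans ?_
  rw [norm_neg, norm_mul, Complex.norm_I, mul_one, Complex.norm_real, Complex.norm_real]
  refine (add_le_add hre him).trans ?_
  linarith

theorem phase_risingWave_of_le_two (hT : zoneCoord m ζ ≤ 2) :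
    (risingWave m).phase ζ = (fadingWave m).phase ζ + ((risingWave m).modFreq * ζ.im +
      2 / m * Real.sin ((risingWave m).modFreq * ζ.im)) := by
  rw [Wave.phase, Wave.phase, radial_risingWave]
  generalize Real.sin _ = x
  simp only [risingWave, fadingWave, Real.smoothTransition.zero_of_nonpos (sub_nonpos.2 hT)]
  push_cast
  ring

theorem norm_carrier_risingWave_mul_le (hm : 4 ≤ m) (hT : zoneCoord m ζ ≤ 2) :
    ‖(risingWave m).carrier ζ‖ * ‖1 + Complex.exp (I * ((risingWave m).modFreq * ζ.im : ℝ))‖ ≤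
      4 * ‖(fadingWave m).carrier ζ + (risingWave m).carrier ζ‖ := by
  have hm4 : (4 : ℝ) ≤ m := by exact_mod_cast hm
  have hκ : |2 / (m : ℝ)| ≤ 1 / 2 := by
    rw [abs_of_nonneg (by positivity), div_le_div_iff₀ (by positivity) (by norm_num)]
    linarith
  have hmod := norm_one_add_exp_le_two_mul (g := (risingWave m).modFreq * ζ.im) hκ
  have norm_exp (φ : ℝ) : ‖Complex.exp (I * φ)‖ = 1 := by
    rw [mul_comm, Complex.norm_exp_ofReal_mul_I]
  have hfactor (φ ψ : ℝ) : Complex.exp (I * φ) + Complex.exp (I * (φ + ψ : ℝ)) =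
      Complex.exp (I * φ) * (1 + Complex.exp (I * ψ)) := by
    rw [Complex.ofReal_add, mul_add, Complex.exp_add]
    ring
  have hsum := mul_norm_add_le_two_mul_norm_smul_add_smul (norm_exp ((fadingWave m).phase ζ))
    (norm_exp ((risingWave m).phase ζ)) (norm_nonneg ((fadingWave m).carrier ζ))
    (norm_nonneg ((risingWave m).carrier ζ))
  rw [← Wave.carrier_eq_norm_smul, ← Wave.carrier_eq_norm_smul, phase_risingWave_of_le_two hT,
    hfactor, norm_mul, norm_exp, one_mul] at hsum
  nlinarith [norm_nonneg ((risingWave m).carrier ζ)]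

theorem zone_eq : zone m ζ =
    ((1 - smoothTransition (zoneCoord m ζ - 1) : ℝ) : ℂ) * (fadingWave m).carrier ζ +
      (smoothTransition (zoneCoord m ζ + 3) : ℂ) * (risingWave m).carrier ζ := rfl

theorem zone_of_le_one (hT : zoneCoord m ζ ≤ 1) : zone m ζ = (fadingWave m).carrier ζ +
    (smoothTransition (zoneCoord m ζ + 3) : ℂ) * (risingWave m).carrier ζ := by
  rw [zone_eq, Real.smoothTransition.zero_of_nonpos (by linarith)]
  simp

theorem zone_of_neg_two_le (hT : -2 ≤ zoneCoord m ζ) : zone m ζ =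
    ((1 - smoothTransition (zoneCoord m ζ - 1) : ℝ) : ℂ) * (fadingWave m).carrier ζ +
      (risingWave m).carrier ζ := by
  rw [zone_eq, Real.smoothTransition.one_of_one_le (x := _ + 3) (by linarith)]
  simp

theorem zone_of_two_le (hT : 2 ≤ zoneCoord m ζ) : zone m ζ = (risingWave m).carrier ζ := by
  rw [zone_of_neg_two_le (by linarith), Real.smoothTransition.one_of_one_le (by linarith)]
  simp

theorem zone_of_le_neg_three (hT : zoneCoord m ζ ≤ -3) : zone m ζ = (fadingWave m).carrier ζ := by
  rw [zone_of_le_one (by linarith), Real.smoothTransition.zero_of_nonpos (by linarith)]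
  simp

theorem helmholtzSymbol_fadingWave_of_two_le (hT : 2 ≤ zoneCoord m ζ) :
    (fadingWave m).helmholtzSymbol ζ = 0 := by
  have hT' : 1 ≤ zoneCoord m ζ - 1 := by linarith
  simp [Wave.helmholtzSymbol, Wave.symbol, radial_fadingWave, amp_fadingWave,
    deriv_amp_fadingWave, deriv_deriv_amp_fadingWave, Real.smoothTransition.one_of_one_le hT',
    deriv_smoothTransition_eq_zero (.inr hT'), deriv_deriv_smoothTransition_eq_zero (.inr hT')]

theorem norm_helmholtzDefect_zone_le_of_mem_Icc {D : ℝ} (hm : 4 ≤ m)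
    (hT : zoneCoord m ζ ∈ Icc (-1) 1) (hfading : ‖(fadingWave m).helmholtzSymbol ζ‖ ≤ D) :
    ‖helmholtzDefect (zone m) ζ‖ ≤ (D + 96 * m ^ 3) * ‖zone m ζ‖ := by
  have hsum : zone m ζ = (fadingWave m).carrier ζ + (risingWave m).carrier ζ := by
    rw [zone_of_le_one hT.2, Real.smoothTransition.one_of_one_le (by linarith [hT.1])]
    simp
  have hdiff := mul_le_mul_of_nonneg_right
    (norm_helmholtzSymbol_risingWave_sub_fadingWave_le (by lia) hT)
    (norm_nonneg ((risingWave m).carrier ζ))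
  have hcancel := norm_carrier_risingWave_mul_le hm (by linarith [hT.2] : zoneCoord m ζ ≤ 2)
  rw [← hsum] at hcancel
  have hsplit : helmholtzDefect (zone m) ζ = (fadingWave m).helmholtzSymbol ζ * zone m ζ +
      ((risingWave m).helmholtzSymbol ζ - (fadingWave m).helmholtzSymbol ζ) *
        (risingWave m).carrier ζ := by
    rw [helmholtzDefect_zone, hsum]; ring
  rw [hsplit, add_mul]
  refine (norm_add_le _ _).trans (add_le_add ?_ ?_)
  · rw [norm_mul]
    gcongr
  · rw [norm_mul]
    calc _ ≤ _ := hdiff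
      _ = 24 * m ^ 3 * (‖(risingWave m).carrier ζ‖ *
          ‖1 + Complex.exp (I * ((risingWave m).modFreq * ζ.im : ℝ))‖) := by ring
      _ ≤ 24 * m ^ 3 * (4 * ‖zone m ζ‖) := by gcongr
      _ = 96 * m ^ 3 * ‖zone m ζ‖ := by ring

theorem norm_helmholtzDefect_zone_le {D : ℝ} (hm : 4 ≤ m)
    (hfading : ‖(fadingWave m).helmholtzSymbol ζ‖ ≤ D)
    (hrising : ‖(risingWave m).helmholtzSymbol ζ‖ ≤ D) :
    ‖helmholtzDefect (zone m) ζ‖ ≤ (3 * D + 96 * m ^ 3) * ‖zone m ζ‖ := by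
  have hD : 0 ≤ D := (norm_nonneg _).trans hfading
  have hm3 : 0 ≤ 96 * (m : ℝ) ^ 3 * ‖zone m ζ‖ := by positivity
  rw [helmholtzDefect_zone, add_mul]
  rcases le_total (zoneCoord m ζ) (-1) with hT₁ | hT₁
  · have hdom : ‖(risingWave m).carrier ζ‖ ≤ ‖(fadingWave m).carrier ζ‖ / 2 := by
      rw [norm_carrier_fadingWave, norm_carrier_risingWave (by linarith)]
      exact exp_le_half_exp (by linarith)
    have h := norm_mul_add_mul_le_of_dominated hfading hrising
      ((abs_of_nonneg (Real.smoothTransition.nonneg _)).trans_le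
        (Real.smoothTransition.le_one (zoneCoord m ζ + 3))) hdom
    rw [← zone_of_le_one (by linarith)] at h
    linarith
  rcases le_total (zoneCoord m ζ) 1 with hT₂ | hT₂
  · have h := norm_helmholtzDefect_zone_le_of_mem_Icc hm ⟨hT₁, hT₂⟩ hfading
    rw [helmholtzDefect_zone, add_mul] at h
    nlinarith [norm_nonneg (zone m ζ)]
  rcases le_total (zoneCoord m ζ) 2 with hT₃ | hT₃
  · have hdom : ‖(fadingWave m).carrier ζ‖ ≤ ‖(risingWave m).carrier ζ‖ / 2 := by
      rw [norm_carrier_fadingWave, norm_carrier_risingWave hT₃]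
      exact exp_le_half_exp (by linarith)
    have h := norm_mul_add_mul_le_of_dominated hrising hfading
      (abs_one_sub_smoothTransition_le (zoneCoord m ζ - 1)) hdom
    rw [add_comm, add_comm ((risingWave m).carrier ζ), ← zone_of_neg_two_le (by linarith)] at h
    linarith
  · rw [helmholtzSymbol_fadingWave_of_two_le hT₃, zero_mul, zero_add, norm_mul,
      ← zone_of_two_le hT₃]
    have h := mul_le_mul_of_nonneg_right hrising (norm_nonneg (zone m ζ))
    have hDz := mul_nonneg hD (norm_nonneg (zone m ζ))
    linarith

end zone

/-- The square root of the radius `|z| = e^{Re ζ}`. The solution is of size `e^{-O(|z|)}`, and its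
angular frequency, of order `|z|`, jumps where this quantity crosses an integer. -/
def sqrtRadius (ζ : ℂ) : ℝ := Real.exp (ζ.re / 2)

section zoneRange

variable {m : ℕ} {ζ : ℂ}

theorem sqrtRadius_pos : 0 < sqrtRadius ζ := Real.exp_pos _

theorem sqrtRadius_pow_four : sqrtRadius ζ ^ 4 = Real.exp (2 * ζ.re) := by
  rw [sqrtRadius, ← Real.exp_nat_mul]
  congr 1
  push_cast
  ring

theorem zoneCoord_eq_mul_log :
    zoneCoord m ζ = 8 * m * (Real.log (sqrtRadius ζ) - Real.log (m + 1 / 2)) := by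
  rw [zoneCoord, sqrtRadius, Real.log_exp, zoneCenter]
  ring

theorem le_zoneCoord {k : ℝ} (hk : 0 < k) (h : k ≤ sqrtRadius ζ) :
    8 * m * (1 - (m + 1 / 2) / k) ≤ zoneCoord m ζ := by
  have hlog := Real.one_sub_inv_le_log_of_pos (x := k / (m + 1 / 2)) (by positivity)
  rw [inv_div, Real.log_div hk.ne' (by positivity)] at hlog
  rw [zoneCoord_eq_mul_log]
  exact mul_le_mul_of_nonneg_left (by linarith [Real.log_le_log hk h]) (by positivity)

theorem zoneCoord_le {k : ℝ} (h : sqrtRadius ζ ≤ k) :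
    zoneCoord m ζ ≤ 8 * m * (k / (m + 1 / 2) - 1) := by
  have hk : 0 < k := sqrtRadius_pos.trans_le h
  have hlog := Real.log_le_sub_one_of_pos (x := k / (m + 1 / 2)) (by positivity)
  rw [Real.log_div hk.ne' (by positivity)] at hlog
  rw [zoneCoord_eq_mul_log]
  exact mul_le_mul_of_nonneg_left (by linarith [Real.log_le_log sqrtRadius_pos h]) (by positivity)

theorem zoneCoord_le_four (h : sqrtRadius ζ ≤ m + 1) : zoneCoord m ζ ≤ 4 := by
  refine (zoneCoord_le h).trans ?_
  rw [div_sub_one (by positivity), mul_div_assoc', div_le_iff₀ (by positivity)]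
  linarith

theorem neg_four_le_zoneCoord (hm : m ≠ 0) (h : m ≤ sqrtRadius ζ) : -4 ≤ zoneCoord m ζ := by
  refine le_trans (le_of_eq ?_) (le_zoneCoord (by positivity) h)
  field_simp
  ring

theorem zoneCoord_succ_le (hm : m ≠ 0) (h : sqrtRadius ζ ≤ m + 1) : zoneCoord (m + 1) ζ ≤ -3 := by
  have hm1 : (1 : ℝ) ≤ m := Nat.one_le_cast.2 (Nat.one_le_iff_ne_zero.2 hm)
  refine (zoneCoord_le h).trans ?_
  push_cast
  rw [div_sub_one (by positivity), mul_div_assoc', div_le_iff₀ (by positivity)]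
  linarith

theorem three_le_zoneCoord (hm : 5 ≤ m) (h : m + 19 / 20 ≤ sqrtRadius ζ) : 3 ≤ zoneCoord m ζ := by
  have hm5 : (5 : ℝ) ≤ m := by exact_mod_cast hm
  refine le_trans ?_ (le_zoneCoord (by positivity) h)
  rw [one_sub_div (by positivity), mul_div_assoc', le_div_iff₀ (by positivity)]
  linarith

theorem abs_exp_sub_pow_four_le (hm : m ≠ 0) (h : sqrtRadius ζ ∈ Icc (m : ℝ) (m + 1)) :
    |Real.exp (2 * ζ.re) - m ^ 4| ≤ 15 * m ^ 3 := by
  have hm1 : (1 : ℝ) ≤ m := Nat.one_le_cast.2 (Nat.one_le_iff_ne_zero.2 hm)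
  have hlow : (m : ℝ) ^ 4 ≤ sqrtRadius ζ ^ 4 := by gcongr; exact h.1
  have hupp : sqrtRadius ζ ^ 4 ≤ (m + 1 : ℝ) ^ 4 := by gcongr; exacts [sqrtRadius_pos.le, h.2]
  rw [← sqrtRadius_pow_four, abs_of_nonneg (sub_nonneg.2 hlow)]
  nlinarith [mul_nonneg (sub_nonneg.2 hm1) (sq_nonneg (m : ℝ))]

theorem zone_eq_zone_succ (hm : 5 ≤ m) (h₁ : m + 19 / 20 ≤ sqrtRadius ζ)
    (h₂ : sqrtRadius ζ ≤ m + 1) : zone m ζ = zone (m + 1) ζ := by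
  have hT := three_le_zoneCoord hm h₁
  have hm0 : (m : ℝ) ≠ 0 := by positivity
  rw [zone_of_two_le (by linarith), zone_of_le_neg_three (zoneCoord_succ_le (by lia) h₂),
    Wave.carrier, Wave.carrier, Wave.phase, Wave.phase, radial_risingWave, radial_fadingWave]
  have hlevel : (risingWave m).logMod (zoneCoord m ζ) =
      (fadingWave (m + 1)).logMod (zoneCoord (m + 1) ζ) := by
    simp only [risingWave, fadingWave, zoneLevel]
    rw [bentLine_of_ge (by linarith), bentLine, zoneCoord, zoneCoord]
    push_cast
    field_simp
    ring
  have hmod : (risingWave m).mod (zoneCoord m ζ) = 0 := by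
    simp [risingWave, Real.smoothTransition.one_of_one_le (by linarith : 1 ≤ zoneCoord m ζ - 2)]
  rw [hlevel, hmod]
  simp [fadingWave, risingWave]

theorem zoneLevel_le (m : ℕ) : zoneLevel m ≤ -(m ^ 2 / 2) := by
  induction m with
  | zero => simp [zoneLevel]
  | succ m ih =>
    have hstep : 2 / (m + 3 / 2 : ℝ) ≤ zoneCenter (m + 1) - zoneCenter m := by
      have hlog := Real.one_sub_inv_le_log_of_pos (x := (m + 3 / 2 : ℝ) / (m + 1 / 2))
        (by positivity)
      rw [inv_div, Real.log_div (by positivity) (by positivity),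
        one_sub_div (by positivity)] at hlog
      have hcenter : ((m + 1 : ℕ) : ℝ) + 1 / 2 = m + 3 / 2 := by push_cast; ring
      rw [zoneCenter, zoneCenter, hcenter, ← mul_sub]
      refine le_trans (le_of_eq ?_) (mul_le_mul_of_nonneg_left hlog zero_le_two)
      ring
    have hdrop : m + 1 / 2 ≤ (m + 1 : ℝ) * (m + 3) / 2 * (2 / (m + 3 / 2)) := by
      rw [mul_div_assoc', le_div_iff₀ (by positivity)]
      nlinarith
    have hmul := mul_le_mul_of_nonneg_left hstep (by positivity : 0 ≤ (m + 1 : ℝ) * (m + 3) / 2)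
    rw [zoneLevel]
    push_cast
    linarith

theorem norm_zone_le (hm : m ≠ 0) (h : sqrtRadius ζ ∈ Icc (m : ℝ) (m + 1)) :
    ‖zone m ζ‖ ≤ 2 * Real.exp (15 - sqrtRadius ζ ^ 2 / 4) := by
  have hm1 : (1 : ℝ) ≤ m := Nat.one_le_cast.2 (Nat.one_le_iff_ne_zero.2 hm)
  have hT := abs_le.2 ⟨neg_four_le_zoneCoord hm h.1, zoneCoord_le_four h.2⟩
  have hsq : sqrtRadius ζ ^ 2 ≤ (m + 1 : ℝ) ^ 2 := by gcongr; exacts [sqrtRadius_pos.le, h.2]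
  have hlevel := zoneLevel_le m
  have hslope := abs_mul_le_of_nonneg (c := (m + 2) / 8) (by positivity) hT
  have hbend : |(5 / 4 + 3 / (8 * m)) * (smoothTransition (zoneCoord m ζ - 2) * zoneCoord m ζ)| ≤
      13 / 8 * (1 * 4) := by
    have hnonneg := Real.smoothTransition.nonneg (zoneCoord m ζ - 2)
    have hcoef : 5 / 4 + 3 / (8 * m) ≤ (13 / 8 : ℝ) := by
      rw [← le_sub_iff_add_le', div_le_iff₀ (by positivity)]
      linarith
    rw [abs_mul, abs_mul, abs_of_nonneg hnonneg, abs_of_pos (by positivity)]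
    gcongr
    exact Real.smoothTransition.le_one _
  have hfading : ‖(fadingWave m).carrier ζ‖ ≤ Real.exp (15 - sqrtRadius ζ ^ 2 / 4) := by
    rw [norm_carrier_fadingWave, Real.exp_le_exp]
    nlinarith [neg_le_of_abs_le hslope]
  have hrising : ‖(risingWave m).carrier ζ‖ ≤ Real.exp (15 - sqrtRadius ζ ^ 2 / 4) := by
    rw [Wave.norm_carrier, radial_risingWave, Real.exp_le_exp]
    simp only [risingWave, bentLine]
    nlinarith [neg_le_of_abs_le hslope, neg_le_of_abs_le hbend, le_of_abs_le hT]
  rw [zone_eq, two_mul]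
  refine (norm_add_le _ _).trans (add_le_add ?_ ?_)
  · rw [norm_mul, Complex.norm_real]
    exact (mul_le_of_le_one_left (norm_nonneg _) (abs_one_sub_smoothTransition_le _)).trans hfading
  · rw [norm_mul, Complex.norm_real, Real.norm_of_nonneg (Real.smoothTransition.nonneg _)]
    exact (mul_le_of_le_one_left (norm_nonneg _) (Real.smoothTransition.le_one _)).trans hrising

theorem contDiff_zone : ContDiff ℝ 2 (zone m) :=
  (Wave.contDiff_eval _).add (Wave.contDiff_eval _)

theorem zone_add_two_pi_I : zone m (ζ + 2 * Real.pi * I) = zone m ζ := by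
  simp only [zone, Wave.eval_add_two_pi_I]

end zoneRange

theorem exists_norm_helmholtzDefect_zone_le : ∃ C, 0 ≤ C ∧ ∀ m : ℕ, 4 ≤ m → ∀ ζ,
    sqrtRadius ζ ∈ Icc (m : ℝ) (m + 1) →
      ‖helmholtzDefect (zone m) ζ‖ ≤ C * m ^ 3 * ‖zone m ζ‖ := by
  obtain ⟨K, hK, hst⟩ := exists_abs_deriv_smoothTransition_le
  refine ⟨3 * (9 * (300 * K) ^ 2) + 96, by positivity, fun m hm ζ hζ ↦ ?_⟩
  have hm0 : m ≠ 0 := by lia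
  have hexp := abs_exp_sub_pow_four_le hm0 hζ
  have hT := abs_le.2 ⟨neg_four_le_zoneCoord hm0 hζ.1, zoneCoord_le_four hζ.2⟩
  refine (norm_helmholtzDefect_zone_le hm (norm_helmholtzSymbol_fadingWave_le hK hst hm0 hexp)
    (norm_helmholtzSymbol_risingWave_le hK hst hm0 hexp hT)).trans_eq ?_
  ring

/-- The wave that continues the tenth zone down to the origin. Its modulus is bent from the slope
of the fading wave at the outer end to the slope for which the wave is a multiple of `e^{90ζ}`, so
that it becomes a holomorphic monomial. -/
def coreWave : Wave where
  scale := 40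
  center := zoneCenter 10
  freq := 90
  modFreq := 0
  amp _ := 1
  logMod := bentLine (zoneLevel 10) (9 / 4) (-(15 / 4)) (-6)
  mod _ := 0
  contDiff_amp := contDiff_const
  contDiff_logMod := contDiff_bentLine
  contDiff_mod := contDiff_const

section coreWave

variable {ζ : ℂ}

theorem radial_coreWave : coreWave.radial ζ = zoneCoord 10 ζ := by
  rw [Wave.radial, zoneCoord, coreWave]
  norm_num

theorem eval_coreWave : coreWave.eval ζ =
    Complex.exp (bentLine (zoneLevel 10) (9 / 4) (-(15 / 4)) (-6) (zoneCoord 10 ζ) +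
      I * (90 * ζ.im)) := by
  rw [Wave.eval, Wave.carrier, Wave.phase, radial_coreWave]
  simp [coreWave]

theorem norm_eval_coreWave : ‖coreWave.eval ζ‖ =
    Real.exp (bentLine (zoneLevel 10) (9 / 4) (-(15 / 4)) (-6) (zoneCoord 10 ζ)) := by
  rw [eval_coreWave, Complex.norm_exp]
  simp

theorem eval_coreWave_eq_zone (h₁ : 9 + 19 / 20 ≤ sqrtRadius ζ) (h₂ : sqrtRadius ζ ≤ 10) :
    coreWave.eval ζ = zone 10 ζ := by
  have hlow : -5 ≤ zoneCoord 10 ζ :=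
    le_trans (by norm_num) (le_zoneCoord (m := 10) (by norm_num) h₁)
  have hupp : zoneCoord 10 ζ ≤ -3 := zoneCoord_succ_le (m := 9) (by norm_num) (by norm_num [h₂])
  rw [zone_of_le_neg_three hupp, eval_coreWave, bentLine_of_ge (by linarith), Wave.carrier,
    Wave.phase, radial_fadingWave]
  simp only [fadingWave, bentLine, zoneFreq]
  norm_num

theorem eval_coreWave_of_sqrtRadius_le_one (h : sqrtRadius ζ ≤ 1) : coreWave.eval ζ =
    Complex.exp (zoneLevel 10 - 90 * zoneCenter 10) * Complex.exp ζ ^ 90 := by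
  have hT : zoneCoord 10 ζ ≤ -6 := (zoneCoord_le h).trans (by norm_num)
  have hζ : (ζ : ℂ) = ζ.re + I * ζ.im := by rw [mul_comm, Complex.re_add_im]
  rw [eval_coreWave, bentLine_of_le hT, ← Complex.exp_nat_mul, ← Complex.exp_add, zoneCoord]
  congr 1
  conv_rhs => rw [hζ]
  push_cast
  ring

theorem helmholtzSymbol_coreWave : coreWave.helmholtzSymbol ζ =
    ((1600 * (deriv (deriv coreWave.logMod) (zoneCoord 10 ζ) +
      deriv coreWave.logMod (zoneCoord 10 ζ) ^ 2) - 90 ^ 2 +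
      3 / 4 * Real.exp (2 * ζ.re) : ℝ) : ℂ) := by
  rw [Wave.helmholtzSymbol_of_amp_eq_one, Wave.laplacianLog, Wave.radialLogDeriv, Wave.localFreq,
    radial_coreWave]
  · simp only [coreWave]
    simp
    ring
  all_goals simp [coreWave]

theorem logMod_coreWave_radial_eq {T : ℝ} (hT : T ≤ -6) :
    1600 * (deriv (deriv coreWave.logMod) T + deriv coreWave.logMod T ^ 2) - 90 ^ 2 = 0 := by
  have hT' : T - -6 ≤ 0 := by linarith
  simp only [coreWave]
  rw [deriv_deriv_bentLine, deriv_bentLine]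
  simp only [deriv_smoothTransition_eq_zero (.inl hT'),
    Real.smoothTransition.zero_of_nonpos hT', deriv_deriv_smoothTransition_eq_zero (.inl hT')]
  norm_num

theorem one_le_exp_of_neg_six_le_zoneCoord (h : -6 ≤ zoneCoord 10 ζ) :
    1 ≤ Real.exp (2 * ζ.re) := by
  have hlog := Real.one_sub_inv_le_log_of_pos (x := 10 + 1 / 2) (by norm_num)
  norm_num [zoneCoord, zoneCenter] at h hlog
  exact Real.one_le_exp (by linarith)

theorem exists_norm_helmholtzDefect_coreWave_le : ∃ C, 0 ≤ C ∧ ∀ ζ, sqrtRadius ζ ≤ 10 →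
    ‖helmholtzDefect coreWave.eval ζ‖ ≤ C * sqrtRadius ζ ^ 4 * ‖coreWave.eval ζ‖ := by
  set N : ℝ → ℝ := fun T ↦
    1600 * (deriv (deriv coreWave.logMod) T + deriv coreWave.logMod T ^ 2) - 90 ^ 2
  have hN : Continuous N := by
    have h := coreWave.contDiff_logMod.continuous_deriv (by simp)
    have h' := (coreWave.contDiff_logMod.deriv' (n := 1)).continuous_deriv (by simp)
    fun_prop
  obtain ⟨M, hM⟩ := isCompact_Icc.exists_bound_of_continuousOn (s := Icc (-6 : ℝ) 0) hN.continuousOn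
  have hM₀ : 0 ≤ M := (norm_nonneg _).trans (hM 0 (by norm_num))
  refine ⟨M + 3 / 4, by positivity, fun ζ hζ ↦ ?_⟩
  have hT : zoneCoord 10 ζ ≤ 0 := (zoneCoord_le hζ).trans (by norm_num)
  have hNE : ‖N (zoneCoord 10 ζ)‖ ≤ M * Real.exp (2 * ζ.re) := by
    rcases le_total (zoneCoord 10 ζ) (-6) with h | h
    · rw [show N (zoneCoord 10 ζ) = 0 from logMod_coreWave_radial_eq h, norm_zero]
      positivity
    · exact (hM _ ⟨h, hT⟩).trans
        (le_mul_of_one_le_right hM₀ (one_le_exp_of_neg_six_le_zoneCoord h))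
  have hcarrier : coreWave.eval ζ = coreWave.carrier ζ := by simp [Wave.eval, coreWave]
  rw [Wave.helmholtzDefect_eval, norm_mul, hcarrier, helmholtzSymbol_coreWave, Complex.norm_real,
    sqrtRadius_pow_four, add_mul]
  gcongr
  refine (norm_add_le _ _).trans (add_le_add hNE ?_)
  rw [Real.norm_of_nonneg (by positivity)]

theorem norm_eval_coreWave_le (h : sqrtRadius ζ ≤ 10) :
    ‖coreWave.eval ζ‖ ≤ 2 * Real.exp (15 - sqrtRadius ζ ^ 2 / 4) := by
  have hT : zoneCoord 10 ζ ≤ 0 := (zoneCoord_le h).trans (by norm_num)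
  have hlevel := zoneLevel_le 10
  have hsq : sqrtRadius ζ ^ 2 ≤ 10 ^ 2 := by gcongr; exact sqrtRadius_pos.le
  have hmod : bentLine (zoneLevel 10) (9 / 4) (-(15 / 4)) (-6) (zoneCoord 10 ζ) ≤
      15 - sqrtRadius ζ ^ 2 / 4 := by
    push_cast at hlevel
    rcases le_total (zoneCoord 10 ζ) (-6) with h | h
    · rw [bentLine_of_le h]
      linarith
    · rw [bentLine]
      nlinarith [Real.smoothTransition.nonneg (zoneCoord 10 ζ - -6),
        Real.smoothTransition.le_one (zoneCoord 10 ζ - -6)]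
  rw [norm_eval_coreWave]
  linarith [Real.exp_le_exp.2 hmod, Real.exp_pos (15 - sqrtRadius ζ ^ 2 / 4)]

end coreWave

/-- The approximate solution on the annulus `m ≤ e^{s/2} ≤ m + 1`. -/
def block (m : ℕ) : ℂ → ℂ := if m ≤ 9 then coreWave.eval else zone m

/-- The solution in log-polar coordinates. -/
def profile (ζ : ℂ) : ℂ := block ⌊sqrtRadius ζ⌋₊ ζ

section profile

variable {m : ℕ} {ζ : ℂ}

theorem block_of_le (hm : m ≤ 9) : block m = coreWave.eval := if_pos hm

theorem block_of_ge (hm : 10 ≤ m) : block m = zone m := if_neg (by lia)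

theorem contDiff_block : ContDiff ℝ 2 (block m) := by
  rcases le_or_gt m 9 with hm | hm
  · rw [block_of_le hm]; exact Wave.contDiff_eval _
  · rw [block_of_ge hm]; exact contDiff_zone

theorem block_add_two_pi_I : block m (ζ + 2 * Real.pi * I) = block m ζ := by
  rcases le_or_gt m 9 with hm | hm
  · rw [block_of_le hm]; exact Wave.eval_add_two_pi_I _ _
  · rw [block_of_ge hm]; exact zone_add_two_pi_I

theorem block_eq_block_succ (h₁ : m + 1 - 1 / 20 ≤ sqrtRadius ζ) (h₂ : sqrtRadius ζ ≤ m + 1) :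
    block m ζ = block (m + 1) ζ := by
  rcases lt_trichotomy m 9 with hm | rfl | hm
  · rw [block_of_le hm.le, block_of_le hm]
  · rw [block_of_le le_rfl, block_of_ge le_rfl]
    norm_num at h₁ h₂
    exact eval_coreWave_eq_zone (by linarith) h₂
  · rw [block_of_ge hm, block_of_ge (by lia)]
    exact zone_eq_zone_succ (by lia) (by linarith) h₂

theorem norm_block_le (h : sqrtRadius ζ ∈ Icc (m : ℝ) (m + 1)) :
    ‖block m ζ‖ ≤ 2 * Real.exp (15 - sqrtRadius ζ ^ 2 / 4) := by
  rcases le_or_gt m 9 with hm | hm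
  · have hm' : (m : ℝ) ≤ 9 := by exact_mod_cast hm
    rw [block_of_le hm]
    exact norm_eval_coreWave_le (by linarith [h.2])
  · rw [block_of_ge hm]
    exact norm_zone_le (by lia) h

theorem exists_norm_helmholtzDefect_block_le : ∃ C, ∀ (m : ℕ) ζ,
    sqrtRadius ζ ∈ Icc (m : ℝ) (m + 1) →
      (1 + sqrtRadius ζ) * ‖helmholtzDefect (block m) ζ‖ ≤ C * sqrtRadius ζ ^ 4 * ‖block m ζ‖ := by
  obtain ⟨C₁, hC₁, hcore⟩ := exists_norm_helmholtzDefect_coreWave_le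
  obtain ⟨C₂, hC₂, hzone⟩ := exists_norm_helmholtzDefect_zone_le
  refine ⟨11 * C₁ + 2 * C₂, fun m ζ h ↦ ?_⟩
  have ht : 0 < sqrtRadius ζ := sqrtRadius_pos
  rw [add_mul (11 * C₁), add_mul (11 * C₁ * _)]
  rcases le_or_gt m 9 with hm | hm
  · have hm' : (m : ℝ) ≤ 9 := by exact_mod_cast hm
    have ht10 : sqrtRadius ζ ≤ 10 := by linarith [h.2]
    rw [block_of_le hm]
    calc (1 + sqrtRadius ζ) * ‖helmholtzDefect coreWave.eval ζ‖
      _ ≤ 11 * (C₁ * sqrtRadius ζ ^ 4 * ‖coreWave.eval ζ‖) := by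
          gcongr
          · linarith
          · exact hcore ζ ht10
      _ = 11 * C₁ * sqrtRadius ζ ^ 4 * ‖coreWave.eval ζ‖ := by ring
      _ ≤ _ := le_add_of_nonneg_right (by positivity)
  · have hm' : (9 : ℝ) < m := by exact_mod_cast hm
    rw [block_of_ge hm]
    calc (1 + sqrtRadius ζ) * ‖helmholtzDefect (zone m) ζ‖
      _ ≤ 2 * sqrtRadius ζ * (C₂ * m ^ 3 * ‖zone m ζ‖) := by
          gcongr
          · linarith [h.1]
          · exact hzone m (by lia) ζ h
      _ ≤ 2 * sqrtRadius ζ * (C₂ * sqrtRadius ζ ^ 3 * ‖zone m ζ‖) := by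
          gcongr
          exact h.1
      _ = 2 * C₂ * sqrtRadius ζ ^ 4 * ‖zone m ζ‖ := by ring
      _ ≤ _ := le_add_of_nonneg_left (by positivity)

theorem sqrtRadius_mem_Icc_floor : sqrtRadius ζ ∈ Icc (⌊sqrtRadius ζ⌋₊ : ℝ) (⌊sqrtRadius ζ⌋₊ + 1) :=
  ⟨Nat.floor_le sqrtRadius_pos.le, (Nat.lt_floor_add_one _).le⟩

theorem profile_eventuallyEq_block : profile =ᶠ[𝓝 ζ] block ⌊sqrtRadius ζ⌋₊ :=
  floor_glue_eventuallyEq (Real.continuous_exp.comp (Complex.continuous_re.div_const 2))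
    (fun _ ↦ sqrtRadius_pos.le) (by norm_num) (fun _ _ ↦ block_eq_block_succ) ζ

theorem contDiff_profile : ContDiff ℝ 2 profile :=
  contDiff_iff_contDiffAt.2 fun _ ↦
    contDiff_block.contDiffAt.congr_of_eventuallyEq profile_eventuallyEq_block

theorem periodic_profile : Function.Periodic profile (2 * Real.pi * I) := fun ζ ↦ by
  have h : sqrtRadius (ζ + 2 * Real.pi * I) = sqrtRadius ζ := by simp [sqrtRadius]
  rw [profile, profile, h, block_add_two_pi_I]

theorem norm_profile_le : ‖profile ζ‖ ≤ 2 * Real.exp (15 - sqrtRadius ζ ^ 2 / 4) :=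
  norm_block_le sqrtRadius_mem_Icc_floor

theorem exists_norm_helmholtzDefect_profile_le : ∃ C, ∀ ζ,
    (1 + sqrtRadius ζ) * ‖helmholtzDefect profile ζ‖ ≤ C * sqrtRadius ζ ^ 4 * ‖profile ζ‖ := by
  obtain ⟨C, hC⟩ := exists_norm_helmholtzDefect_block_le
  refine ⟨C, fun ζ ↦ ?_⟩
  rw [helmholtzDefect, (laplacian_congr_nhds profile_eventuallyEq_block).eq_of_nhds]
  exact hC _ ζ sqrtRadius_mem_Icc_floor

theorem profile_of_sqrtRadius_le_one (h : sqrtRadius ζ ≤ 1) : profile ζ =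
    Complex.exp (zoneLevel 10 - 90 * zoneCenter 10) * Complex.exp ζ ^ 90 := by
  have hfloor : ⌊sqrtRadius ζ⌋₊ ≤ 9 := Nat.floor_le_of_le (h.trans (by norm_num))
  rw [profile, block_of_le hfloor, eval_coreWave_of_sqrtRadius_le_one h]

end profile

/-- Meshkov's solution: a function on the plane with `|Δv + 3/4 v| ≤ C (1 + |z|)^{-1/2} |v|` that
decays exponentially. The value at `0` is the limit there, which the junk value of `Complex.log 0`
would miss. -/
def planeSolution (z : ℂ) : ℂ := if z = 0 then 0 else profile (Complex.log z)

section planeSolution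

variable {z : ℂ}

theorem planeSolution_zero : planeSolution 0 = 0 := if_pos rfl

theorem planeSolution_of_ne_zero (hz : z ≠ 0) : planeSolution z = profile (Complex.log z) :=
  if_neg hz

theorem sqrtRadius_log (hz : z ≠ 0) : sqrtRadius (Complex.log z) = √‖z‖ := by
  rw [sqrtRadius, Complex.log_re, Real.exp_half, Real.exp_log (norm_pos_iff.2 hz)]

theorem planeSolution_of_norm_le_one (hz : ‖z‖ ≤ 1) :
    planeSolution z = Complex.exp (zoneLevel 10 - 90 * zoneCenter 10) * z ^ 90 := by
  rcases eq_or_ne z 0 with rfl | hz₀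
  · simp [planeSolution_zero]
  · have h : sqrtRadius (Complex.log z) ≤ 1 := by
      rw [sqrtRadius_log hz₀]
      exact Real.sqrt_le_one.2 hz
    rw [planeSolution_of_ne_zero hz₀, profile_of_sqrtRadius_le_one h, Complex.exp_log hz₀]

theorem planeSolution_ne_zero : planeSolution ≠ 0 := fun h ↦ by
  have h₁ := congrFun h 1
  rw [planeSolution_of_norm_le_one norm_one.le] at h₁
  simp at h₁

theorem planeSolution_eventuallyEq_monomial : planeSolution =ᶠ[𝓝 0]
    fun z ↦ Complex.exp (zoneLevel 10 - 90 * zoneCenter 10) * z ^ 90 := by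
  filter_upwards [Metric.ball_mem_nhds 0 one_pos] with z hz
  exact planeSolution_of_norm_le_one (mem_ball_zero_iff.1 hz).le

-- The branch of the logarithm centred at `z` is smooth near `z` even on the cut of `Complex.log`;
-- periodicity makes it interchangeable with `Complex.log` inside the profile.
theorem planeSolution_eventuallyEq_profile_comp (hz : z ≠ 0) :
    planeSolution =ᶠ[𝓝 z] profile ∘ fun y ↦ Complex.log (y / z) + Complex.log z := by
  filter_upwards [eventually_ne_nhds hz] with y hy
  have hexp : Complex.exp (Complex.log y) = Complex.exp (Complex.log (y / z) + Complex.log z) := by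
    rw [Complex.exp_add, Complex.exp_log hy, Complex.exp_log (div_ne_zero hy hz),
      Complex.exp_log hz, div_mul_cancel₀ y hz]
  obtain ⟨n, hn⟩ := Complex.exp_eq_exp_iff_exists_int.1 hexp
  rw [planeSolution_of_ne_zero hy, hn, Function.comp_apply]
  exact periodic_profile.int_mul n _

theorem log_div_self_add_log (hz : z ≠ 0) :
    Complex.log (z / z) + Complex.log z = Complex.log z := by
  rw [div_self hz, Complex.log_one, zero_add]

theorem hasDerivAt_log_div_add_log (hz : z ≠ 0) :
    HasDerivAt (fun y ↦ Complex.log (y / z) + Complex.log z) z⁻¹ z := by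
  have hslit : z / z ∈ Complex.slitPlane := by rw [div_self hz]; exact Complex.one_mem_slitPlane
  simpa [hz] using (((hasDerivAt_id z).div_const z).clog hslit).add_const (Complex.log z)

theorem analyticAt_log_div_add_log (hz : z ≠ 0) :
    AnalyticAt ℂ (fun y ↦ Complex.log (y / z) + Complex.log z) z := by
  have hslit : z / z ∈ Complex.slitPlane := by rw [div_self hz]; exact Complex.one_mem_slitPlane
  exact ((analyticAt_id.div_const).clog hslit).add analyticAt_const

theorem contDiff_planeSolution : ContDiff ℝ 2 planeSolution := by
  refine contDiff_iff_contDiffAt.2 fun z ↦ ?_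
  rcases eq_or_ne z 0 with rfl | hz
  · exact (contDiff_const.mul (contDiff_id.pow 90)).contDiffAt.congr_of_eventuallyEq
      planeSolution_eventuallyEq_monomial
  · exact (contDiff_profile.contDiffAt.comp z
      ((analyticAt_log_div_add_log hz).contDiffAt.restrict_scalars ℝ)).congr_of_eventuallyEq
      (planeSolution_eventuallyEq_profile_comp hz)

theorem laplacian_planeSolution_zero : Δ planeSolution 0 = 0 := by
  have h : AnalyticAt ℂ (fun z ↦ Complex.exp (zoneLevel 10 - 90 * zoneCenter 10) * z ^ 90) 0 := by
    fun_prop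
  rw [(laplacian_congr_nhds planeSolution_eventuallyEq_monomial).eq_of_nhds]
  exact h.harmonicAt.2.eq_of_nhds

theorem laplacian_planeSolution_add (hz : z ≠ 0) : Δ planeSolution z + 3 / 4 * planeSolution z =
    (‖z‖ ^ 2 : ℝ)⁻¹ • helmholtzDefect profile (Complex.log z) := by
  have hnorm : (‖z‖ : ℂ) ≠ 0 := by simpa using hz
  have hexp : Real.exp (2 * (Complex.log z).re) = ‖z‖ ^ 2 := by
    rw [Complex.log_re, two_mul, Real.exp_add, Real.exp_log (norm_pos_iff.2 hz), sq]
  rw [(laplacian_congr_nhds (planeSolution_eventuallyEq_profile_comp hz)).eq_of_nhds,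
    laplacian_comp_of_analyticAt (analyticAt_log_div_add_log hz) contDiff_profile.contDiffAt,
    (hasDerivAt_log_div_add_log hz).deriv, log_div_self_add_log hz, planeSolution_of_ne_zero hz,
    helmholtzDefect, hexp, norm_inv, inv_pow, smul_add]
  congr 1
  rw [Complex.real_smul]
  push_cast
  field_simp

theorem exists_norm_laplacian_planeSolution_add_le : ∃ C, ∀ z,
    (1 + √‖z‖) * ‖Δ planeSolution z + 3 / 4 * planeSolution z‖ ≤ C * ‖planeSolution z‖ := by
  obtain ⟨C, hC⟩ := exists_norm_helmholtzDefect_profile_le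
  refine ⟨C, fun z ↦ ?_⟩
  rcases eq_or_ne z 0 with rfl | hz
  · simp [laplacian_planeSolution_zero, planeSolution_zero]
  · have hpos : 0 < ‖z‖ ^ 2 := by positivity
    have hsqrt : √‖z‖ ^ 4 = ‖z‖ ^ 2 := by
      rw [show 4 = 2 * 2 from rfl, pow_mul, Real.sq_sqrt (norm_nonneg z)]
    have h := hC (Complex.log z)
    rw [sqrtRadius_log hz, hsqrt] at h
    rw [laplacian_planeSolution_add hz, planeSolution_of_ne_zero hz, norm_smul,
      Real.norm_of_nonneg (by positivity), mul_left_comm, inv_mul_le_iff₀ hpos]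
    linarith

theorem norm_planeSolution_le : ‖planeSolution z‖ ≤ 2 * Real.exp 15 * Real.exp (-(‖z‖ / 4)) := by
  rcases eq_or_ne z 0 with rfl | hz
  · rw [planeSolution_zero, norm_zero]
    positivity
  · have h := norm_profile_le (ζ := Complex.log z)
    rwa [sqrtRadius_log hz, Real.sq_sqrt (norm_nonneg z), sub_eq_add_neg, Real.exp_add,
      ← mul_assoc, ← planeSolution_of_ne_zero hz] at h

end planeSolution

theorem sqrt_one_add_sq_rpow_half_le {r : ℝ} (hr : 0 ≤ r) :
    √(1 + r ^ 2) ^ (1 / 2 : ℝ) ≤ 1 + √r := by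
  rw [← Real.sqrt_eq_rpow]
  refine Real.sqrt_le_iff.2 ⟨by positivity, Real.sqrt_le_iff.2 ⟨by positivity, ?_⟩⟩
  have h : 1 + r ≤ (1 + √r) ^ 2 := by nlinarith [Real.sq_sqrt hr, Real.sqrt_nonneg r]
  nlinarith

theorem one_add_sqrt_le_mul_one_add_sqrt_mul {μ r : ℝ} (hμ : 0 < μ) :
    1 + √r ≤ (1 + (√μ)⁻¹) * (1 + √(μ * r)) := by
  have hsqrt : (√μ)⁻¹ * √(μ * r) = √r := by
    rw [Real.sqrt_mul hμ.le, inv_mul_cancel_left₀ (Real.sqrt_ne_zero'.2 hμ)]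
  have h₁ : 0 ≤ (√μ)⁻¹ := by positivity
  have h₂ : 0 ≤ √(μ * r) := by positivity
  linarith

/-- The solution rescaled so that it solves the equation with eigenvalue `3/4 * μ ^ 2`. -/
def rescaledSolution (μ : ℝ) (x : EuclideanSpace ℝ (Fin 2)) : ℂ :=
  planeSolution (μ • Complex.orthonormalBasisOneI.repr.symm x)

section rescaledSolution

variable {μ : ℝ}

theorem contDiff_rescaledSolution : ContDiff ℝ 2 (rescaledSolution μ) :=
  contDiff_planeSolution.comp
    ((Complex.orthonormalBasisOneI.repr.symm.contDiff).const_smul μ)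

theorem rescaledSolution_ne_zero (hμ : 0 < μ) : rescaledSolution μ ≠ 0 := fun h ↦
  planeSolution_ne_zero <| funext fun z ↦ by
    have hz := congrFun h (Complex.orthonormalBasisOneI.repr (μ⁻¹ • z))
    rwa [rescaledSolution, LinearIsometryEquiv.symm_apply_apply, smul_inv_smul₀ hμ.ne'] at hz

theorem norm_smul_orthonormalBasisOneI_repr_symm (hμ : 0 < μ) (x : EuclideanSpace ℝ (Fin 2)) :
    ‖μ • Complex.orthonormalBasisOneI.repr.symm x‖ = μ * ‖x‖ := by
  rw [norm_smul, LinearIsometryEquiv.norm_map, Real.norm_of_nonneg hμ.le]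

theorem norm_rescaledSolution_le (hμ : 0 < μ) (x : EuclideanSpace ℝ (Fin 2)) :
    ‖rescaledSolution μ x‖ ≤ 2 * Real.exp 15 * Real.exp (-(μ / 4 * ‖x‖)) := by
  refine norm_planeSolution_le.trans_eq ?_
  rw [norm_smul_orthonormalBasisOneI_repr_symm hμ, mul_div_right_comm]

theorem exists_norm_lap_rescaledSolution_add_le (hμ : 0 < μ) : ∃ C, ∀ x,
    ‖lap (rescaledSolution μ) x + (3 / 4 * μ ^ 2 : ℝ) * rescaledSolution μ x‖ ≤
      C * √(1 + ‖x‖ ^ 2) ^ (-(1 / 2 : ℝ)) * ‖rescaledSolution μ x‖ := by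
  obtain ⟨C, hC⟩ := exists_norm_laplacian_planeSolution_add_le
  refine ⟨μ ^ 2 * (1 + (√μ)⁻¹) * C, fun x ↦ ?_⟩
  have hx := hC (μ • Complex.orthonormalBasisOneI.repr.symm x)
  set D := Δ planeSolution (μ • Complex.orthonormalBasisOneI.repr.symm x) +
    3 / 4 * planeSolution (μ • Complex.orthonormalBasisOneI.repr.symm x)
  rw [norm_smul_orthonormalBasisOneI_repr_symm hμ] at hx
  have hbracket := (sqrt_one_add_sq_rpow_half_le (norm_nonneg x)).trans
    (one_add_sqrt_le_mul_one_add_sqrt_mul hμ)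
  have hdefect : lap (rescaledSolution μ) x + (3 / 4 * μ ^ 2 : ℝ) * rescaledSolution μ x =
      (μ ^ 2 : ℝ) * D := by
    have h := laplacian_comp_smul_linearIsometryEquiv Complex.orthonormalBasisOneI.repr.symm μ
      contDiff_planeSolution x
    rw [Complex.real_smul] at h
    rw [lap_eq_laplacian contDiff_rescaledSolution]
    refine (congrArg (· + _) h).trans ?_
    simp only [rescaledSolution, D]
    push_cast
    ring
  rw [hdefect, norm_mul, Complex.norm_of_nonneg (sq_nonneg μ), Real.rpow_neg (by positivity),
    mul_right_comm, ← div_eq_mul_inv, le_div_iff₀ (by positivity)]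
  calc μ ^ 2 * ‖D‖ * √(1 + ‖x‖ ^ 2) ^ (1 / 2 : ℝ)
    _ ≤ μ ^ 2 * ‖D‖ * ((1 + (√μ)⁻¹) * (1 + √(μ * ‖x‖))) := by gcongr
    _ = μ ^ 2 * (1 + (√μ)⁻¹) * ((1 + √(μ * ‖x‖)) * ‖D‖) := by ring
    _ ≤ μ ^ 2 * (1 + (√μ)⁻¹) * (C * ‖rescaledSolution μ x‖) :=
        mul_le_mul_of_nonneg_left hx (by positivity)
    _ = μ ^ 2 * (1 + (√μ)⁻¹) * C * ‖rescaledSolution μ x‖ := by ring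

end rescaledSolution

theorem stmt2 (lam : ℝ) (hlam : 0 < lam) :
    ∃ (C c : ℝ) (V u : EuclideanSpace ℝ (Fin 2) → ℂ),
      0 < C ∧ 0 < c ∧ u ≠ 0 ∧ ContDiff ℝ 2 u ∧
      (∀ x, lap u x + (lam : ℂ) * u x = V x * u x) ∧
      (∀ x, ‖V x‖ ≤ C * Real.sqrt (1 + ‖x‖ ^ 2) ^ (-(1 / 2 : ℝ))) ∧
      (∀ x, ‖u x‖ ≤ C * Real.exp (-(c * ‖x‖))) := by
  obtain ⟨μ, hμ, rfl⟩ : ∃ μ : ℝ, 0 < μ ∧ 3 / 4 * μ ^ 2 = lam :=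
    ⟨√(4 / 3 * lam), by positivity, by rw [Real.sq_sqrt (by positivity)]; ring⟩
  obtain ⟨C, hC⟩ := exists_norm_lap_rescaledSolution_add_le hμ
  set C' := max C (2 * Real.exp 15)
  have hC' : 0 < C' := lt_max_of_lt_right (by positivity)
  obtain ⟨V, hV, hVle⟩ := exists_eq_mul_of_norm_le
    (B := fun x : EuclideanSpace ℝ (Fin 2) ↦ C' * √(1 + ‖x‖ ^ 2) ^ (-(1 / 2 : ℝ)))
    (fun x ↦ by positivity) fun x ↦ (hC x).trans (by gcongr; exact le_max_left _ _)
  refine ⟨C', μ / 4, V, rescaledSolution μ, hC', by positivity, rescaledSolution_ne_zero hμ,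
    contDiff_rescaledSolution, hV, hVle, fun x ↦ (norm_rescaledSolution_le hμ x).trans ?_⟩
  gcongr
  exact le_max_right _ _
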